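/- With probability at least 1−δ over the draw of the i.i.d. samples, simultaneously for all c ∈ [0,1] with q̂_p(c) > 0 and q_p(c) > 0, one has |q̂_u(c)/q̂_p(c) − q_u(c)/q_p(c)| ≤ (1/q̂_p(c))·(√(log(4/δ)/(2 n_u)) + (q_u(c)/q_p(c))·√(log(4/δ)/(2 n_p))). -/

import Mathlib

/-!
The samples enter the claim only through the real numbers `f (x i)`, and the ratio bound is an
algebraic consequence of the two uniform estimates `|q̂_p - q_p| ≤ √(log (4/δ) / (2 n_p))` and
`|q̂_u - q_u| ≤ √(log (4/δ) / (2 n_u))`. Each of these splits into an upper and a lower deviation,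
so it suffices that each of four one-sided deviations exceeds its bound with probability at most
`δ / 4`. That is Massart's form of the one-sided Dvoretzky–Kiefer–Wolfowitz inequality,
`P (sup (F̂ - F) ≥ ε) ≤ exp (-2 n ε²)`, in the range `2 n ε² ≥ log 4`, applied to the laws of `f`
and of `-f`. The quantile transform reduces an arbitrary law on `ℝ` to the uniform law, and
leaves a volume in the cube: `volume_crossSet_le_exp`.

Conditioning on the largest coordinate gives a recursion in the dimension for the volume of the
set `crossSet` of points whose empirical distribution function crosses a line; any solution of the
corresponding differential inequalities dominates the volume (`volume_crossSet_le`). Two explicit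
solutions are used.

* Smirnov's finite sum (`smirnovPoly`). For `n < 30` the range of `ε` is cut into cells of width
  `1 / (n q)`, on which monotonicity leaves finitely many inequalities between natural numbers,
  evaluated by the kernel.
* The sum `∑ h, q_h(n ε) (n)_h / n ^ h`, where `(n)_h` is the falling factorial and `q_h(A)` is the
  probability that partial sums of independent uniform variables first exceed `A` at step `h`.
  For `n ≥ 30`, Stirling's formula and concavity bound `(n)_h / n ^ h` by a geometric sequence
  `C ρ ^ h`, and the generating function `∑ h, q_h(x) ρ ^ h` satisfies the renewal equation
  `G(x) = ρ ∫ G` over `[x - 1, x]`, hence decays like `exp (-κ (x + θ))` as soon as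
  `ρ (exp κ - 1) ≤ κ` and the bound holds on `[0, 1]`. With `y = 2 ε`, the choices are `κ = 2y`
  and `ρ = exp (-(y + y² / 6))`; the step condition is then `sinh y ≤ y exp (y² / 6)`. The gain
  `θ = 29/100 (1 - y³)` pays for the Stirling prefactor when `y ≤ 1`; for `y ≥ 1` the leading term,
  linear in `n`, is negative enough by itself and `θ = 0` works.
-/

open MeasureTheory Real

/-- Population tail function `q_P(z) = P({x : f(x) ≥ z})`. -/
noncomputable def qtail {X : Type*} [MeasurableSpace X] (P : Measure X) (f : X → ℝ) (z : ℝ) : ℝ :=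
  (P {x | z ≤ f x}).toReal

/-- Empirical tail function `q̂(z) = (1/n)·#{i : f(x_i) ≥ z}`. -/
noncomputable def qemp {X : Type*} {n : ℕ} (f : X → ℝ) (xs : Fin n → X) (z : ℝ) : ℝ :=
  ((Finset.univ.filter (fun i => z ≤ f (xs i))).card : ℝ) / n

/-- Product measure `P_p^{n_p} ⊗ P_u^{n_u}` governing the samples. -/
noncomputable def sampleMeasure {X : Type*} [MeasurableSpace X] (Pp Pu : Measure X)
    (np nu : ℕ) : Measure ((Fin np → X) × (Fin nu → X)) :=
  (Measure.pi fun _ : Fin np => Pp).prod (Measure.pi fun _ : Fin nu => Pu)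

/-! ### Crossing sets and the comparison principle -/

/-- The points of `[0, t] ^ m` some coordinate `x i` of which has rank at least `A + B * x i`, the rank
being the number of coordinates that are at most `x i`. For `A = n ε`, `B = m = n`, `t = 1` this is
the event that the empirical distribution function of `n` uniform variables exceeds the true one
by at least `ε`. -/
def crossSet (A B : ℝ) (m : ℕ) (t : ℝ) : Set (Fin m → ℝ) :=
  {x | (∀ l, 0 ≤ x l ∧ x l ≤ t) ∧
    ∃ i, A + B * x i ≤ ((Finset.univ.filter fun l => x l ≤ x i).card : ℝ)}

lemma measurable_count {Ω : Type*} [MeasurableSpace Ω] {m : ℕ} {y : Ω → Fin m → ℝ}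
    (hy : ∀ l, Measurable fun w => y w l) (i : Fin m) :
    Measurable fun w => ((Finset.univ.filter fun l => y w l ≤ y w i).card : ℝ) := by
  have : (fun w => ((Finset.univ.filter fun l => y w l ≤ y w i).card : ℝ)) =
      fun w => ∑ l, if y w l ≤ y w i then (1 : ℝ) else 0 := by
    funext w; simp
  rw [this]
  refine Finset.measurable_sum _ fun l _ => ?_
  exact Measurable.ite (measurableSet_le (hy l) (hy i)) measurable_const measurable_const

lemma measurableSet_crossPairs (A B a t : ℝ) (m : ℕ) :
    MeasurableSet {p : ℝ × (Fin m → ℝ) | p.1 ∈ Set.Ioc a t ∧ p.2 ∈ crossSet A B m p.1} := by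
  have h1 : MeasurableSet {p : ℝ × (Fin m → ℝ) | p.1 ∈ Set.Ioc a t} :=
    measurable_fst measurableSet_Ioc
  have h2 : ∀ l, Measurable fun p : ℝ × (Fin m → ℝ) => p.2 l := fun l => by fun_prop
  refine h1.inter ?_
  have h3 : {p : ℝ × (Fin m → ℝ) | p.2 ∈ crossSet A B m p.1} =
    (⋂ l, {p : ℝ × (Fin m → ℝ) | 0 ≤ p.2 l} ∩ {p | p.2 l ≤ p.1}) ∩
     ⋃ i, {p : ℝ × (Fin m → ℝ) | A + B * p.2 i ≤
      ((Finset.univ.filter fun l => p.2 l ≤ p.2 i).card : ℝ)} := by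
    ext p; simp [crossSet]
  change MeasurableSet {p : ℝ × (Fin m → ℝ) | p.2 ∈ crossSet A B m p.1}
  rw [h3]
  refine (MeasurableSet.iInter fun l => ?_).inter (MeasurableSet.iUnion fun i => ?_)
  · exact (measurableSet_le measurable_const (h2 l)).inter (measurableSet_le (h2 l) measurable_fst)
  · exact measurableSet_le (((h2 i).const_mul B).const_add A) (measurable_count h2 i)

/-- Either all coordinates lie below the abscissa `(m + 1 - A) / B` where the line reaches height
`m + 1`, or the largest one lies beyond it; in the second case it is not a crossing, and removing it
does not change the ranks of the others. -/
lemma crossSet_succ_subset {A B : ℝ} (hB : 0 < B) (m : ℕ) (t : ℝ) :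
    crossSet A B (m + 1) t ⊆ (Set.univ.pi fun _ => Set.Icc 0 ((m + 1 - A) / B)) ∪
      ⋃ i : Fin (m + 1), (MeasurableEquiv.piFinSuccAbove (fun _ => ℝ) i) ⁻¹'
        {p : ℝ × (Fin m → ℝ) | p.1 ∈ Set.Ioc ((m + 1 - A) / B) t ∧ p.2 ∈ crossSet A B m p.1} := by
  rintro x ⟨hx, j, hj⟩
  by_cases hall : ∀ l, x l ≤ (m + 1 - A) / B
  · left
    exact fun l _ => ⟨(hx l).1, hall l⟩
  right
  push Not at hall
  obtain ⟨l0, hl0⟩ := hall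
  obtain ⟨i, -, hi⟩ := Finset.exists_max_image Finset.univ x ⟨l0, Finset.mem_univ _⟩
  have hia : (m + 1 - A) / B < x i := hl0.trans_le (hi l0 (Finset.mem_univ _))
  -- A crossing `x j` lies below the abscissa, since its rank is at most `m + 1`.
  have hcard : ((Finset.univ.filter fun l => x l ≤ x j).card : ℝ) ≤ m + 1 := by
    have := Finset.card_le_univ (Finset.univ.filter fun l => x l ≤ x j)
    rw [Fintype.card_fin] at this
    exact_mod_cast this
  have hja : x j ≤ (m + 1 - A) / B := by
    rw [le_div_iff₀ hB]; linarith
  have hji : x j < x i := hja.trans_lt hia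
  have hne : j ≠ i := by rintro rfl; exact lt_irrefl _ hji
  obtain ⟨j', rfl⟩ := Fin.exists_succAbove_eq hne
  refine Set.mem_iUnion.2 ⟨i, ⟨⟨hia, (hx i).2⟩, ?_, j', ?_⟩⟩
  · intro l
    exact ⟨(hx _).1, hi _ (Finset.mem_univ _)⟩
  · change A + B * x (i.succAbove j') ≤
      ((Finset.univ.filter fun l => x (i.succAbove l) ≤ x (i.succAbove j')).card : ℝ)
    refine hj.trans (le_of_eq ?_)
    rw [Finset.card_filter, Fin.sum_univ_succAbove _ i, if_neg (not_le.2 hji), zero_add,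
      Finset.card_filter]

/-- The recursion in the dimension, integrating over the value `s` of the largest coordinate. -/
lemma volume_crossSet_succ_le {A B : ℝ} (hB : 0 < B) (m : ℕ) (t : ℝ) :
    volume (crossSet A B (m + 1) t) ≤ ENNReal.ofReal ((m + 1 - A) / B) ^ (m + 1) +
      (m + 1) * ∫⁻ s in Set.Ioc ((m + 1 - A) / B) t, volume (crossSet A B m s) := by
  refine (measure_mono (crossSet_succ_subset hB m t)).trans ?_
  refine (measure_union_le _ _).trans (add_le_add ?_ ?_)
  · rw [volume_pi_pi]; simp
  · refine (measure_iUnion_fintype_le _ _).trans ?_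
    have key : ∀ i : Fin (m + 1), volume ((MeasurableEquiv.piFinSuccAbove (fun _ => ℝ) i) ⁻¹'
        {p : ℝ × (Fin m → ℝ) | p.1 ∈ Set.Ioc ((m + 1 - A) / B) t ∧ p.2 ∈ crossSet A B m p.1})
        = ∫⁻ s in Set.Ioc ((m + 1 - A) / B) t, volume (crossSet A B m s) := by
      intro i
      have hS := measurableSet_crossPairs A B ((m + 1 - A) / B) t m
      have := (volume_preserving_piFinSuccAbove (fun _ : Fin (m + 1) => ℝ) i).measure_preimage
        hS.nullMeasurableSet
      rw [this, Measure.volume_eq_prod, Measure.prod_apply hS,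
        ← lintegral_indicator measurableSet_Ioc]
      refine lintegral_congr fun s => ?_
      by_cases hs : s ∈ Set.Ioc ((m + 1 - A) / B) t
      · rw [Set.indicator_of_mem hs]
        congr 1
        ext y
        simp only [Set.mem_preimage, Set.mem_ofPred_eq]
        exact and_iff_right hs
      · rw [Set.indicator_of_notMem hs]
        convert measure_empty (μ := (volume : Measure (Fin m → ℝ)))
        ext y
        simp only [Set.mem_preimage, Set.mem_ofPred_eq, Set.mem_empty_iff_false, iff_false]
        exact fun h => hs h.1
    rw [Finset.sum_congr rfl fun i _ => key i]
    simp

/-- Comparison principle: a family with `(r (m + 1))' = (m + 1) r m` that dominates the volume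
`((m - A) / B) ^ m` of the full cube at the time `(m - A) / B` dominates the volume of the crossing
set from that time on. -/
theorem volume_crossSet_le {A B : ℝ} (hB : 0 < B) (r : ℕ → ℝ → ℝ)
    (hder : ∀ m t, HasDerivAt (r (m + 1)) ((m + 1) * r m t) t)
    (hcont : Continuous (r 0))
    (hinit : ∀ m : ℕ, 0 < m → A ≤ m → ((m - A) / B) ^ m ≤ r m ((m - A) / B))
    (hnn : ∀ (m : ℕ) t, 0 ≤ t → (m - A) / B ≤ t → 0 ≤ r m t) (m : ℕ) :
    ∀ t, 0 ≤ t → (m - A) / B ≤ t → volume (crossSet A B m t) ≤ ENNReal.ofReal (r m t) := by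
  have hc : ∀ m, Continuous (r m) := by
    rintro (_ | m)
    · exact hcont
    · exact continuous_iff_continuousAt.2 fun t => (hder m t).continuousAt
  induction m with
  | zero =>
    intro t _ _
    have : crossSet A B 0 t = ∅ := by
      ext x; simp only [crossSet, Set.mem_ofPred_eq, Set.mem_empty_iff_false, iff_false]
      rintro ⟨-, i, -⟩; exact i.elim0
    simp [this]
  | succ m ih =>
    intro t ht0 hat
    push_cast at hat
    set a : ℝ := (m + 1 - A) / B with ha
    rcases lt_or_ge a 0 with han | hap
    -- The line starts above height `m + 1`, so there is no crossing.
    · have : crossSet A B (m + 1) t = ∅ := by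
        ext x
        simp only [Set.mem_empty_iff_false, iff_false]
        rintro ⟨hx, i, hi⟩
        have hcard : ((Finset.univ.filter fun l => x l ≤ x i).card : ℝ) ≤ m + 1 := by
          have := Finset.card_le_univ (Finset.univ.filter fun l => x l ≤ x i)
          rw [Fintype.card_fin] at this
          exact_mod_cast this
        have h1 : m + 1 - A < 0 := by
          by_contra! h
          exact absurd (div_nonneg h hB.le) (not_le.2 han)
        have := mul_nonneg hB.le (hx i).1
        linarith
      simp [this]
    · have hAm : A ≤ m + 1 := by
        by_contra! h
        exact absurd hap (not_le.2 (div_neg_of_neg_of_pos (by linarith) hB))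
      refine (volume_crossSet_succ_le hB m t).trans ?_
      have h1 : ∫⁻ s in Set.Ioc a t, volume (crossSet A B m s) ≤
          ∫⁻ s in Set.Ioc a t, ENNReal.ofReal (r m s) := by
        refine setLIntegral_mono' measurableSet_Ioc fun s hs => ih s (hap.trans hs.1.le) ?_
        refine le_trans ?_ hs.1.le
        rw [ha]; gcongr; linarith
      have h2 : ∫⁻ s in Set.Ioc a t, ENNReal.ofReal (r m s) =
          ENNReal.ofReal (∫ s in a..t, r m s) := by
        rw [intervalIntegral.integral_of_le hat,
          ofReal_integral_eq_lintegral_ofReal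
            (((hc m).integrableOn_Icc).mono_set Set.Ioc_subset_Icc_self)]
        refine (ae_restrict_iff' measurableSet_Ioc).2 (Filter.Eventually.of_forall fun s hs => ?_)
        refine hnn m s (hap.trans hs.1.le) (le_trans ?_ hs.1.le)
        rw [ha]; gcongr; linarith
      have h3 : ∫ s in a..t, (m + 1) * r m s = r (m + 1) t - r (m + 1) a :=
        intervalIntegral.integral_eq_sub_of_hasDerivAt (fun s _ => hder m s)
          ((continuous_const.mul (hc m)).intervalIntegrable _ _)
      rw [intervalIntegral.integral_const_mul] at h3
      have h4 := hinit (m + 1) m.succ_pos (by exact_mod_cast hAm)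
      push_cast at h4
      have h5 : (0 : ℝ) ≤ ∫ s in a..t, r m s := by
        refine intervalIntegral.integral_nonneg hat fun s hs => hnn m s (hap.trans hs.1)
          (le_trans ?_ hs.1)
        rw [ha]; gcongr; linarith
      calc _ ≤ ENNReal.ofReal a ^ (m + 1) + (m + 1) * ENNReal.ofReal (∫ s in a..t, r m s) := by
            gcongr; exact h1.trans h2.le
        _ = ENNReal.ofReal (a ^ (m + 1) + (m + 1) * ∫ s in a..t, r m s) := by
            rw [ENNReal.ofReal_add (by positivity) (by positivity), ENNReal.ofReal_pow hap,
              ENNReal.ofReal_mul (by positivity)]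
            congr 2
            rw [ENNReal.ofReal_add (by positivity) zero_le_one]; simp
        _ ≤ _ := by
            refine ENNReal.ofReal_le_ofReal ?_
            rw [h3]; linarith

/-! ### First passage of uniform partial sums -/

/-- The probability `q_h(A)` that the partial sums of independent uniform variables on `[0, 1]`
exceed `A` for the first time at step `h`, defined by conditioning on the first variable. For
`A < 0` the passage takes place at step `0`. -/
noncomputable def hitProb : ℕ → ℝ → ℝ
  | 0, A => if A < 0 then 1 else 0
  | h + 1, A => if A < 0 then 0 else ∫ s in (A - 1)..A, hitProb h s

lemma hitProb_zero (A : ℝ) : hitProb 0 A = if A < 0 then 1 else 0 := rfl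

lemma hitProb_succ_of_neg (h : ℕ) {A : ℝ} (hA : A < 0) : hitProb (h + 1) A = 0 := by
  simp [hitProb, hA]

lemma hitProb_succ_of_nonneg (h : ℕ) {A : ℝ} (hA : 0 ≤ A) :
    hitProb (h + 1) A = ∫ s in (A - 1)..A, hitProb h s := by
  simp [hitProb, not_lt.2 hA]

/-- The regularity of `hitProb h` has to be proved by one induction, because its continuity on
`[0, ∞)` comes from the integrability and boundedness of its predecessor. At `0` there is a jump. -/
lemma hitProb_regular (h : ℕ) : ContinuousOn (hitProb h) (Set.Ici 0) ∧
    (∀ a b, IntervalIntegrable (hitProb h) volume a b) ∧ ∀ A, 0 ≤ hitProb h A := by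
  have ext : ∀ h, ContinuousOn (hitProb h) (Set.Ici 0) → ContinuousOn (hitProb h) (Set.Iio 0) →
      (∃ M, ∀ A, |hitProb h A| ≤ M) → ∀ a b, IntervalIntegrable (hitProb h) volume a b := by
    rintro h h1 h2 ⟨M, hM⟩ a b
    have hm : Measurable (hitProb h) := by
      refine measurable_of_restrict_of_restrict_compl (measurableSet_Ici (a := (0:ℝ)))
        h1.domRestrict.measurable ?_
      rw [Set.compl_Ici]; exact h2.domRestrict.measurable
    refine (intervalIntegrable_const (c := M)).mono_fun hm.aestronglyMeasurable ?_
    exact Filter.Eventually.of_forall fun x => (hM x).trans (le_abs_self M)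
  have main : ContinuousOn (hitProb h) (Set.Ici 0) ∧ ContinuousOn (hitProb h) (Set.Iio 0) ∧
     ∀ A, 0 ≤ hitProb h A ∧ hitProb h A ≤ 1 := by
    induction h with
    | zero =>
      refine ⟨continuousOn_const (c := (0:ℝ)) |>.congr fun x hx => ?_,
        continuousOn_const (c := (1:ℝ)) |>.congr fun x hx => ?_, fun A => ?_⟩
      · simp [hitProb_zero, not_lt.2 hx.out]
      · simp [hitProb_zero, hx.out]
      · rw [hitProb_zero]; split_ifs <;> norm_num
    | succ h ih =>
      obtain ⟨h1, h2, h3⟩ := ih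
      have hi := ext h h1 h2 ⟨1, fun A => by rw [abs_of_nonneg (h3 A).1]; exact (h3 A).2⟩
      refine ⟨?_, continuousOn_const (c := (0:ℝ)) |>.congr fun x hx =>
        hitProb_succ_of_neg h hx.out, fun A => ?_⟩
      · have hp : Continuous fun b => ∫ s in (0:ℝ)..b, hitProb h s :=
          intervalIntegral.continuous_primitive hi 0
        have : Continuous fun A : ℝ => (∫ s in (0:ℝ)..A, hitProb h s) -
            ∫ s in (0:ℝ)..(A - 1), hitProb h s :=
          hp.sub (hp.comp (continuous_id.sub continuous_const))
        refine this.continuousOn.congr fun A hA => ?_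
        rw [hitProb_succ_of_nonneg h hA]
        exact (intervalIntegral.integral_interval_sub_left (hi _ _) (hi _ _)).symm
      · rcases lt_or_ge A 0 with hA | hA
        · simp [hitProb_succ_of_neg h hA]
        · rw [hitProb_succ_of_nonneg h hA]
          refine ⟨intervalIntegral.integral_nonneg (by linarith) fun s _ => (h3 s).1, ?_⟩
          calc _ ≤ ∫ s in (A - 1)..A, (1:ℝ) :=
                intervalIntegral.integral_mono_on (by linarith) (hi _ _)
                  intervalIntegrable_const fun s _ => (h3 s).2
            _ = 1 := by simp
  refine ⟨main.1, ext h main.1 main.2.1 ⟨1, fun A => ?_⟩, fun A => (main.2.2 A).1⟩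
  rw [abs_of_nonneg (main.2.2 A).1]; exact (main.2.2 A).2

lemma hitProb_nonneg (h : ℕ) (A : ℝ) : 0 ≤ hitProb h A := (hitProb_regular h).2.2 A

lemma hitProb_intervalIntegrable (h : ℕ) (a b : ℝ) :
  IntervalIntegrable (hitProb h) volume a b := (hitProb_regular h).2.1 a b

lemma hitProb_eq_zero (h : ℕ) {A : ℝ} (hA : (h : ℝ) ≤ A) : hitProb h A = 0 := by
  induction h generalizing A with
  | zero => simpa [hitProb_zero] using hA
  | succ h ih =>
    push_cast at hA
    have : (0:ℝ) ≤ h := h.cast_nonneg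
    rw [hitProb_succ_of_nonneg h (by linarith)]
    have : Set.EqOn (hitProb h) (fun _ => 0) (Set.uIcc (A - 1) A) := by
      intro s hs
      rw [Set.uIcc_of_le (by linarith)] at hs
      exact ih (by linarith [hs.1])
    rw [intervalIntegral.integral_congr this]; simp

lemma hitProb_right_continuous (h : ℕ) (A : ℝ) :
    ContinuousWithinAt (hitProb h) (Set.Ioi A) A := by
  rcases lt_or_ge A 0 with hA | hA
  · refine ContinuousAt.continuousWithinAt ?_
    refine (continuousAt_const (y := hitProb h A)).congr ?_
    filter_upwards [Iio_mem_nhds hA] with x hx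
    rcases h with _ | h
    · simp [hitProb_zero, hA, hx.out]
    · simp [hitProb_succ_of_neg, hA, hx.out]
  · exact ((hitProb_regular h).1 A hA).mono fun x hx => hA.trans hx.out.le

/-- Only a right derivative is available, since `hitProb h` is only right continuous at the jumps. -/
lemma hitProb_succ_deriv (h : ℕ) {A : ℝ} (hA : 0 ≤ A) :
    HasDerivWithinAt (hitProb (h + 1)) (hitProb h A - hitProb h (A - 1)) (Set.Ici A) A := by
  have hi := hitProb_intervalIntegrable h
  have hsm : ∀ c, StronglyMeasurableAtFilter (hitProb h) (nhdsWithin c (Set.Ioi c)) volume := by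
    intro c
    refine ⟨Set.Ioc c (c+1), Ioc_mem_nhdsGT (by linarith), ?_⟩
    have := (hi c (c+1)).1
    exact this.aestronglyMeasurable
  have hd : ∀ c, HasDerivWithinAt (fun b => ∫ s in (0:ℝ)..b, hitProb h s) (hitProb h c)
      (Set.Ici c) c := fun c =>
    intervalIntegral.integral_hasDerivWithinAt_right (hi 0 c) (s := Set.Ici c) (t := Set.Ioi c)
      (hsm c) (hitProb_right_continuous h c)
  have h2 : HasDerivWithinAt (fun b => ∫ s in (0:ℝ)..(b - 1), hitProb h s) (hitProb h (A - 1))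
      (Set.Ici A) A := by
    have := (hd (A - 1)).comp A (h := fun b => b - 1) (s := Set.Ici A)
      ((hasDerivWithinAt_id A (Set.Ici A)).sub_const 1) (fun x hx => by
        have := hx.out; simp only [Set.mem_Ici]; linarith)
    rw [mul_one] at this
    exact this
  refine ((hd A).sub h2).congr_of_mem (fun x hx => ?_) Set.self_mem_Ici
  rw [hitProb_succ_of_nonneg h (hA.trans hx.out)]
  exact (intervalIntegral.integral_interval_sub_left (hi _ _) (hi _ _)).symm

/-- The polynomial `∑ h, q_h(A) (m)_h b ^ (m - h)`, with `(m)_h` the falling factorial. In the scale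
where the line has slope `1`, it is the second solution of the comparison principle. -/
noncomputable def renewalPoly (A : ℝ) (m : ℕ) (b : ℝ) : ℝ :=
  ∑ h ∈ Finset.range (m + 1), hitProb h A * (m.descFactorial h : ℝ) * b ^ (m - h)

lemma renewalPoly_hasDerivAt (A : ℝ) (m : ℕ) (b : ℝ) :
    HasDerivAt (renewalPoly A (m + 1)) ((m + 1) * renewalPoly A m b) b := by
  have h1 : ∀ h ∈ Finset.range (m + 2), HasDerivAt
    (fun b : ℝ => hitProb h A * ((m+1).descFactorial h : ℝ) * b ^ (m + 1 - h))
    (hitProb h A * ((m+1).descFactorial h : ℝ) * ((m + 1 - h : ℕ) * b ^ (m + 1 - h - 1))) b :=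
    fun h _ => (hasDerivAt_pow _ _).const_mul _
  have h2 := HasDerivAt.fun_sum h1
  refine h2.congr_deriv ?_
  rw [Finset.sum_range_succ, renewalPoly, Finset.mul_sum]
  simp only [Nat.sub_self, Nat.cast_zero, zero_mul, mul_zero, add_zero]
  refine Finset.sum_congr rfl fun h hh => ?_
  have hle : h ≤ m := Nat.lt_succ_iff.1 (Finset.mem_range.1 hh)
  have e : m + 1 - h - 1 = m - h := by omega
  have e2 : (m+1-h) * (m+1).descFactorial h = (m+1) * m.descFactorial h := by
    rw [← Nat.descFactorial_succ, Nat.succ_descFactorial_succ]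
  have e3 : ((m+1-h : ℕ) : ℝ) * ((m+1).descFactorial h : ℝ) = (m+1) * m.descFactorial h := by
    exact_mod_cast e2
  rw [e]
  linear_combination hitProb h A * b ^ (m - h) * e3

lemma renewalPoly_of_neg {A : ℝ} (hA : A < 0) (m : ℕ) (b : ℝ) : renewalPoly A m b = b ^ m := by
  rw [renewalPoly, Finset.sum_range_succ', Finset.sum_eq_zero]
  · simp [hitProb_zero, hA]
  · intro h _; simp [hitProb_succ_of_neg h hA]

/-- The initial value at `b = m - A`. The difference of the two sides vanishes at `A = m` and is
constant in `A`: the relation `q_{h+1}'(A) = q_h(A) - q_h(A - 1)` turns its derivative into the same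
identity for `m - 1` and `A - 1`. -/
lemma renewalPoly_diag (m : ℕ) : ∀ {A : ℝ}, A ≤ m → (0 < m ∨ A < 0) →
    renewalPoly A m (m - A) = (m - A) ^ m := by
  induction m with
  | zero =>
    rintro A - (h | h)
    · exact absurd h (lt_irrefl _)
    · exact renewalPoly_of_neg h _ _
  | succ m ih =>
    intro A hA _
    rcases lt_or_ge A 0 with h0 | h0
    · exact renewalPoly_of_neg h0 _ _
    push_cast at hA ⊢
    set D : ℝ → ℝ := fun A => renewalPoly A (m + 1) (m + 1 - A) - (m + 1 - A) ^ (m + 1) with hD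
    -- At `A = m + 1` only the top coefficient could contribute, and `q_{m+1}(m + 1) = 0`.
    have hend : D (m + 1) = 0 := by
      simp only [hD, sub_self, renewalPoly]
      rw [Finset.sum_range_succ, Finset.sum_eq_zero]
      · rw [hitProb_eq_zero (m + 1) (by push_cast; rfl)]; simp
      · intro h hh
        have := Finset.mem_range.1 hh
        rw [zero_pow (by omega), mul_zero]
    have hcont : ContinuousOn D (Set.Icc 0 (m + 1)) := by
      have : ∀ h, ContinuousOn (hitProb h) (Set.Icc 0 (m + 1)) := fun h =>
        (hitProb_regular h).1.mono fun x hx => hx.1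
      simp only [hD, renewalPoly]
      refine ContinuousOn.sub (continuousOn_finsetSum _ fun h _ => ?_) (by fun_prop)
      exact ((this h).mul continuousOn_const).mul (by fun_prop)
    have hder : ∀ x ∈ Set.Ico (0:ℝ) (m + 1), HasDerivWithinAt D 0 (Set.Ici x) x := by
      intro x hx
      have hlin : ∀ k : ℕ, HasDerivWithinAt (fun A : ℝ => ((m:ℝ) + 1 - A) ^ k)
          (-(k * (m + 1 - x) ^ (k - 1))) (Set.Ici x) x := by
        intro k
        have := ((hasDerivAt_id x).const_sub ((m:ℝ) + 1)).fun_pow k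
        refine (this.hasDerivWithinAt).congr_deriv ?_
        simp
      -- `hitProb 0` is locally constant to the right of every `x ≥ 0`.
      have hq0 : HasDerivWithinAt (hitProb 0) 0 (Set.Ici x) x := by
        refine (hasDerivWithinAt_const x (Set.Ici x) (0:ℝ)).congr_of_mem (fun y hy => ?_)
          Set.self_mem_Ici
        simp [hitProb_zero, not_lt.2 (hx.1.trans hy.out)]
      have hsum : HasDerivWithinAt (fun A : ℝ => renewalPoly A (m + 1) (m + 1 - A))
          (∑ h ∈ Finset.range (m + 1), (hitProb h x - hitProb h (x - 1)) *
            ((m + 1).descFactorial (h + 1) : ℝ) * (m + 1 - x) ^ (m - h) -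
            (m + 1) * renewalPoly x m (m + 1 - x)) (Set.Ici x) x := by
        have hs1 : HasDerivWithinAt (fun A : ℝ => ∑ h ∈ Finset.range (m + 1),
            hitProb (h + 1) A * ((m + 1).descFactorial (h + 1) : ℝ) * (m + 1 - A) ^ (m - h))
            (∑ h ∈ Finset.range (m + 1), ((hitProb h x - hitProb h (x - 1)) *
            ((m + 1).descFactorial (h + 1) : ℝ) * (m + 1 - x) ^ (m - h) +
            hitProb (h + 1) x * ((m + 1).descFactorial (h + 1) : ℝ) *
              (-((m - h : ℕ) * (m + 1 - x) ^ (m - h - 1))))) (Set.Ici x) x := by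
          refine HasDerivWithinAt.fun_sum fun h _ => ?_
          exact ((hitProb_succ_deriv h hx.1).mul_const _).mul (hlin (m - h))
        have hs0 := (hq0.mul_const ((m + 1).descFactorial 0 : ℝ)).mul (hlin (m + 1))
        refine ((hs1.add hs0).congr_of_mem (fun y hy => ?_) Set.self_mem_Ici).congr_deriv ?_
        · rw [renewalPoly, Finset.sum_range_succ']
          simp
        · have hR := (renewalPoly_hasDerivAt x m (m + 1 - x))
          have h1 : ∀ h ∈ Finset.range (m + 2), HasDerivAt
            (fun b : ℝ => hitProb h x * ((m+1).descFactorial h : ℝ) * b ^ (m + 1 - h))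
            (hitProb h x * ((m+1).descFactorial h : ℝ) *
              ((m + 1 - h : ℕ) * (m + 1 - x) ^ (m + 1 - h - 1))) (m + 1 - x) :=
            fun h _ => (hasDerivAt_pow _ _).const_mul _
          have huniq := hR.unique (HasDerivAt.fun_sum h1)
          rw [huniq, Finset.sum_range_succ' _ (m + 1), Finset.sum_add_distrib]
          simp only [Nat.add_sub_add_right, mul_neg, Finset.sum_neg_distrib]
          push_cast
          ring
      have hall := hsum.sub (hlin (m + 1))
      refine hall.congr_deriv ?_
      have hprev : renewalPoly (x - 1) m (m + 1 - x) = (m + 1 - x) ^ m := by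
        have := ih (A := x - 1) (by linarith [hx.2]) (by
          rcases Nat.eq_zero_or_pos m with h | h
          · right; subst h; have := hx.2; push_cast at this; linarith
          · exact Or.inl h)
        have e : (m : ℝ) - (x - 1) = m + 1 - x := by ring
        rwa [e] at this
      have hexp : ∀ y, ∑ h ∈ Finset.range (m + 1), hitProb h y *
            ((m + 1).descFactorial (h + 1) : ℝ) * (m + 1 - x) ^ (m - h) =
            (m + 1) * renewalPoly y m (m + 1 - x) := by
        intro y
        rw [renewalPoly, Finset.mul_sum]
        refine Finset.sum_congr rfl fun h _ => ?_
        rw [Nat.succ_descFactorial_succ]; push_cast; ring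
      simp only [sub_mul, Finset.sum_sub_distrib, hexp, hprev]
      push_cast
      simp
    have := constant_of_has_deriv_right_zero hcont hder
    have e1 := this A ⟨h0, hA⟩
    have e2 := this (m + 1) ⟨by positivity, le_rfl⟩
    have : D A = 0 := by rw [e1, ← e2, hend]
    simp only [hD] at this
    linarith

lemma renewalPoly_nonneg (A : ℝ) (m : ℕ) {b : ℝ} (hb : 0 ≤ b) : 0 ≤ renewalPoly A m b :=
  Finset.sum_nonneg fun h _ => by have := hitProb_nonneg h A; positivity

/-- The crossing probability is at most `E [(n)_T / n ^ T]`, where `T` is the first passage time of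
uniform partial sums above `A`. -/
theorem volume_crossSet_le_hitProb {A : ℝ} (hA : 0 ≤ A) {n : ℕ} (hn : 0 < n) :
    volume (crossSet A n n 1) ≤ ENNReal.ofReal (∑ h ∈ Finset.range (n + 1),
      hitProb h A * ((n.descFactorial h : ℝ) / n ^ h)) := by
  have hB : (0:ℝ) < n := by exact_mod_cast hn
  have := volume_crossSet_le (A := A) hB (fun m t => renewalPoly A m (n * t) / n ^ m)
    (fun m t => ?_) ?_ (fun m hm0 hm => ?_) (fun m t ht _ => ?_) n 1 zero_le_one ?_
  · refine this.trans (ENNReal.ofReal_le_ofReal (le_of_eq ?_))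
    simp only [mul_one, renewalPoly]
    rw [Finset.sum_div]
    refine Finset.sum_congr rfl fun h hh => ?_
    have : n = (n - h) + h := by have := Finset.mem_range.1 hh; omega
    have e : (n:ℝ) ^ n = n ^ (n - h) * n ^ h := by rw [← pow_add, ← this]
    rw [e]; field_simp
  · have h1 := ((renewalPoly_hasDerivAt A m (n * t)).comp t ((hasDerivAt_id t).const_mul (n:ℝ)))
    refine (h1.div_const ((n:ℝ) ^ (m + 1))).congr_deriv ?_
    field_simp
    ring
  · simp only [renewalPoly]; fun_prop
  · have e : (n:ℝ) * ((m - A) / n) = m - A := by field_simp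
    simp only [e]
    rw [renewalPoly_diag m hm (Or.inl hm0), div_pow]
  · exact div_nonneg (renewalPoly_nonneg A m (by positivity)) (by positivity)
  · rw [div_le_one hB]; linarith

/-! ### Smirnov sums and small samples -/

/-- The sum in Smirnov's formula at `A = j / q` and `b = n`, truncated to the indices below its last
argument and cleared of denominators. -/
def cellSum (n q j : ℕ) : ℕ → ℕ
  | 0 => 0
  | k + 1 => cellSum n q j k + if j < k * q then
      n.descFactorial k / k.factorial * (k * q - j) ^ k * ((n - k) * q + j) ^ (n - k - 1) else 0

/-- The natural number `q ^ n * smirnovPoly (j / q) n n`, for `j < n q`; see `smirnovPoly_eq_cellNum`. -/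
def cellNum (n q j : ℕ) : ℕ := (n * q - j) ^ n + j * cellSum n q j n

/-- A sufficient condition for the deviation inequality for all `ε` with `j ≤ n q ε < j + 1`. Either
`2 n ε² < log 4` on the whole cell, because `693/1000 < log 2`, or Smirnov's sum at the left end is
at most `((1 - w) / (1 + w)) ^ (2 n)` with `w = ((j + 1) / (n q))² / 2`, a rational lower bound for
the exponential at the right end. -/
def cellCheck (n q j : ℕ) : Bool :=
  decide (1000 * n * (j + 1) ^ 2 ≤ 693 * (n * q) ^ 2) ||
  decide (cellNum n q j * (2 * (n * q) ^ 2 + (j + 1) ^ 2) ^ (2 * n) ≤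
      (n * q) ^ n * (2 * (n * q) ^ 2 - (j + 1) ^ 2) ^ (2 * n))

/-- `cellCheck n q j` for all `j` below the last argument. -/
def rangeCheck (n q : ℕ) : ℕ → Bool
  | 0 => true
  | j + 1 => cellCheck n q j && rangeCheck n q j

/-- The checks of all cells for the sample sizes from `2` to one more than the last argument. -/
def allCheck (q : ℕ) : ℕ → Bool
  | 0 => true
  | n + 1 => rangeCheck (n + 2) q ((n + 2) * q) && allCheck q n

/-- The sample sizes `2, …, 29`, with cells of width `1 / (8 n)`. -/
theorem allCheck_eight : allCheck 8 28 = true := by decide +kernel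
/-- For `n = 1` cells of width `1 / 8` are too coarse. -/
theorem rangeCheck_one : rangeCheck 1 20 20 = true := by decide +kernel

/-- Smirnov's sum for the volume of the crossing set in the scale where the line has slope `1`. The
`k`-th summand corresponds to the last crossing taking place at `k - A`, with `k` points below it. -/
noncomputable def smirnovPoly (A : ℝ) (m : ℕ) (b : ℝ) : ℝ :=
  (if A < m then (m - A) ^ m else 0) + (b + A - m) * ∑ k ∈ Finset.range m,
    if A < k then (m.choose k : ℝ) * (k - A) ^ k * (b + A - k) ^ (m - k - 1) else 0

lemma smirnovPoly_hasDerivAt (A : ℝ) (m : ℕ) (b : ℝ) :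
    HasDerivAt (smirnovPoly A (m + 1)) ((m + 1) * smirnovPoly A m b) b := by
  have hlin : ∀ c : ℝ, HasDerivAt (fun b : ℝ => b + A - c) 1 b := fun c =>
    ((hasDerivAt_id b).add_const A).sub_const c
  have h1 : ∀ k ∈ Finset.range (m + 1), HasDerivAt (fun b : ℝ => (b + A - (m + 1 : ℕ)) *
      if A < k then ((m + 1).choose k : ℝ) * (k - A) ^ k * (b + A - k) ^ (m + 1 - k - 1) else 0)
      (if A < k then ((m + 1).choose k : ℝ) * (k - A) ^ k * ((b + A - k) ^ (m - k) +
        (b + A - (m + 1)) * ((m - k : ℕ) * (b + A - k) ^ (m - k - 1))) else 0) b := by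
    intro k hk
    have e : m + 1 - k - 1 = m - k := by omega
    rw [e]
    split_ifs with h
    · refine ((hlin _).mul (((hlin k).fun_pow (m - k)).const_mul _)).congr_deriv ?_
      push_cast; ring
    · simpa using hasDerivAt_const b (0 : ℝ)
  have h2 := (HasDerivAt.fun_sum h1).const_add (if A < (m + 1 : ℕ) then ((m + 1 : ℕ) - A) ^ (m + 1) else 0)
  have efun : smirnovPoly A (m + 1) = fun b => (if A < (m + 1 : ℕ) then ((m + 1 : ℕ) - A) ^ (m + 1) else 0) +
      ∑ k ∈ Finset.range (m + 1), (b + A - (m + 1 : ℕ)) *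
      if A < k then ((m + 1).choose k : ℝ) * (k - A) ^ k * (b + A - k) ^ (m + 1 - k - 1) else 0 := by
    funext b; rw [smirnovPoly, Finset.mul_sum]
  rw [efun]
  refine h2.congr_deriv ?_
  rw [Finset.sum_range_succ, smirnovPoly, mul_add ((m:ℝ) + 1)]
  refine (add_comm _ _).trans (congrArg₂ (· + ·) ?_ ?_)
  · simp only [Nat.choose_succ_self_right, Nat.sub_self]
    split_ifs <;> simp
  · rw [Finset.mul_sum, Finset.mul_sum]
    refine Finset.sum_congr rfl fun k hk => ?_
    have hk' := Finset.mem_range.1 hk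
    split_ifs with h
    · obtain ⟨d, rfl⟩ : ∃ d, m = k + d + 1 := ⟨m - k - 1, by omega⟩
      have e1 : k + d + 1 - k = d + 1 := by omega
      have e3 : (((k + d + 1 + 1).choose k : ℕ) : ℝ) * (d + 2) = (k + d + 1 + 1) * (k + d + 1).choose k := by
        have := Nat.add_one_mul_choose_eq (k + d + 1) k
        have h3 := Nat.choose_mul_succ_eq (k + d + 1) k
        have e4 : k + d + 1 + 1 - k = d + 2 := by omega
        rw [e4] at h3
        have h4 : (((k + d + 1).choose k * (k + d + 1 + 1) : ℕ) : ℝ) =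
          (((k + d + 1 + 1).choose k * (d + 2) : ℕ) : ℝ) := by rw [h3]
        push_cast at h4; linarith
      rw [e1, Nat.add_sub_cancel]
      push_cast
      linear_combination ((k:ℝ) - A) ^ k * (b + A - k) ^ d * (b + A - (k + d + 1)) * e3
    · simp

lemma smirnovPoly_nonneg {A : ℝ} (m : ℕ) {b : ℝ} (hb : m - A ≤ b) : 0 ≤ smirnovPoly A m b := by
  refine add_nonneg ?_ (mul_nonneg (by linarith) (Finset.sum_nonneg fun k hk => ?_))
  · split_ifs with h
    · exact pow_nonneg (by linarith) _
    · exact le_rfl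
  · split_ifs with h
    · have hk' : (k:ℝ) < m := by exact_mod_cast Finset.mem_range.1 hk
      have h1 : 0 ≤ (k:ℝ) - A := by linarith
      have h2 : 0 ≤ b + A - k := by linarith
      positivity
    · exact le_rfl

/-- The upper half of Smirnov's formula, from the comparison principle. -/
lemma volume_crossSet_le_smirnov {A : ℝ} (hA : 0 ≤ A) {n : ℕ} (hn : 0 < n) :
    volume (crossSet A n n 1) ≤ ENNReal.ofReal (smirnovPoly A n n / n ^ n) := by
  have hB : (0:ℝ) < n := by exact_mod_cast hn
  have := volume_crossSet_le (A := A) hB (fun m t => smirnovPoly A m (n * t) / n ^ m)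
    (fun m t => ?_) ?_ (fun m hm0 hm => ?_) (fun m t ht hmt => ?_) n 1 zero_le_one ?_
  · simpa using this
  · have h1 := ((smirnovPoly_hasDerivAt A m (n * t)).comp t ((hasDerivAt_id t).const_mul (n:ℝ)))
    refine (h1.div_const ((n:ℝ) ^ (m + 1))).congr_deriv ?_
    field_simp
    ring
  · simp only [smirnovPoly, Finset.range_zero, Finset.sum_empty]; fun_prop
  · have e : (n:ℝ) * ((m - A) / n) = m - A := by field_simp
    simp only [e]
    rw [div_pow]
    refine div_le_div_of_nonneg_right ?_ (by positivity)
    rw [smirnovPoly]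
    split_ifs with h
    · simp
    · have : (m:ℝ) - A = 0 := by linarith [not_lt.1 h]
      have e2 : (m:ℝ) - A + A - m = 0 := by ring
      rw [e2, this, zero_pow hm0.ne']; simp
  · refine div_nonneg (smirnovPoly_nonneg m ?_) (by positivity)
    rw [div_le_iff₀ hB] at hmt; linarith
  · rw [div_le_one hB]; linarith

lemma crossSet_anti {A A' : ℝ} (h : A ≤ A') (B : ℝ) (m : ℕ) (t : ℝ) :
    crossSet A' B m t ⊆ crossSet A B m t := by
  rintro x ⟨hx, i, hi⟩
  exact ⟨hx, i, by linarith⟩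

lemma smirnovPoly_eq_cellNum {n q j : ℕ} (hq : 0 < q) (hj : j < n * q) :
    smirnovPoly ((j:ℝ) / q) n n * q ^ n = cellNum n q j := by
  have hq' : (0:ℝ) < q := by exact_mod_cast hq
  have hlt : ∀ k : ℕ, (j:ℝ) / q < k ↔ j < k * q := by
    intro k; rw [div_lt_iff₀ hq']; norm_cast
  have hsum : ∀ m ≤ n, (j:ℝ) / q * (∑ k ∈ Finset.range m, if (j:ℝ) / q < k then
      (n.choose k : ℝ) * (k - (j:ℝ) / q) ^ k * (n + (j:ℝ) / q - k) ^ (n - k - 1) else 0) * q ^ n =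
      (j * cellSum n q j m : ℕ) := by
    intro m hm
    induction m with
    | zero => simp [cellSum]
    | succ m ih =>
      rw [Finset.sum_range_succ, mul_add, add_mul, ih (by omega), cellSum, mul_add, Nat.cast_add]
      congr 1
      simp only [hlt]
      split_ifs with h
      · have e1 : n.descFactorial m / m.factorial = n.choose m :=
          (Nat.choose_eq_descFactorial_div_factorial n m).symm
        rw [e1]
        push_cast [Nat.cast_sub h.le, Nat.cast_sub (show m ≤ n by omega)]
        obtain ⟨d, hd⟩ : ∃ d, n = m + d + 1 := ⟨n - m - 1, by omega⟩
        have e2 : n - m - 1 = d := by omega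
        have e3 : ((m:ℝ) - j / q) = (m * q - j) / q := by field_simp
        have e4 : ((n:ℝ) + j / q - m) = ((n - m) * q + j) / q := by field_simp; ring
        have e5 : (q:ℝ) ^ n = q ^ m * q ^ d * q := by rw [hd]; ring
        rw [e2, e3, e4, e5, div_pow, div_pow]
        field_simp
      · simp
  have hn := hsum n le_rfl
  rw [smirnovPoly, cellNum, add_mul, Nat.cast_add]
  have e : (n:ℝ) + (j:ℝ) / q - n = j / q := by ring
  rw [e, hn, if_pos ((hlt n).2 hj)]
  congr 1
  push_cast [Nat.cast_sub hj.le]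
  rw [← mul_pow]
  congr 1
  field_simp

/-- The bound `log ((1 + w) / (1 - w)) ≥ 2 w`, in exponential form. -/
lemma ratio_pow_le_exp {w : ℝ} (hw0 : 0 ≤ w) (hw1 : w < 1) (N : ℕ) :
    ((1 - w) / (1 + w)) ^ N ≤ exp (-(2 * N * w)) := by
  have h : (1 - w) / (1 + w) ≤ exp (-(2 * w)) := by
    have hlog : 2 * w ≤ log ((1 + w) / (1 - w)) := by
      have := sum_range_le_log_div hw0 hw1 1
      simp at this
      linarith
    rw [Real.le_log_iff_exp_le (div_pos (by linarith) (by linarith))] at hlog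
    rw [exp_neg, ← inv_div]
    exact inv_anti₀ (exp_pos _) hlog
  calc _ ≤ (exp (-(2 * w))) ^ N := by
        gcongr
    _ = _ := by rw [← exp_nat_mul]; congr 1; ring

lemma log_four_gt : (1.386 : ℝ) < log 4 := by
  have : log 4 = 2 * log 2 := by
    rw [show (4:ℝ) = 2 ^ 2 by norm_num, log_pow]; push_cast; ring
  have := Real.log_two_gt_d9
  linarith

lemma crossSet_le_exp_of_cell {n q j : ℕ} (hn : 0 < n) (hq : 0 < q) (hj : j < n * q)
    (hc : cellCheck n q j = true) {ε : ℝ} (hlog : log 4 ≤ 2 * n * ε ^ 2) (hε : 0 < ε)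
    (h1 : (j:ℝ) ≤ n * q * ε) (h2 : n * q * ε < j + 1) :
    volume (crossSet (n * ε) n n 1) ≤ ENNReal.ofReal (exp (-(2 * n * ε ^ 2))) := by
  have hn' : (0:ℝ) < n := by exact_mod_cast hn
  have hq' : (0:ℝ) < q := by exact_mod_cast hq
  have hsub : crossSet (n * ε) n n 1 ⊆ crossSet ((j:ℝ) / q) n n 1 :=
    crossSet_anti (by rw [div_le_iff₀ hq']; linarith) _ _ _
  refine (measure_mono hsub).trans ((volume_crossSet_le_smirnov (by positivity) hn).trans
    (ENNReal.ofReal_le_ofReal ?_))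
  have hJ : (0:ℝ) < n * q := by positivity
  have hlarge : ε ≤ ((j:ℝ) + 1) / (n * q) := by rw [le_div_iff₀ hJ]; linarith
  rw [cellCheck, Bool.or_eq_true, decide_eq_true_iff, decide_eq_true_iff] at hc
  rcases hc with hc | hc
  · exfalso
    have hc' : (1000:ℝ) * n * (j + 1) ^ 2 ≤ 693 * (n * q) ^ 2 := by exact_mod_cast hc
    have h3 : (n * q * ε) ^ 2 < ((j:ℝ) + 1) ^ 2 := by gcongr
    have h4 := log_four_gt
    have h5 : 0.693 < n * ε ^ 2 := by linarith
    have h6 : 693 * ((n:ℝ) * q) ^ 2 < 1000 * n * (n * q * ε) ^ 2 := by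
      have : 0.693 * ((n:ℝ) * q) ^ 2 < n * ε ^ 2 * (n * q) ^ 2 := by gcongr
      nlinarith
    have h7 : 1000 * (n:ℝ) * (n * q * ε) ^ 2 < 1000 * n * (j + 1) ^ 2 := by gcongr
    linarith
  · set i : ℕ := j + 1 with hi
    have hile : i ≤ n * q := hj
    have hile' : (i:ℝ) ≤ n * q := by exact_mod_cast hile
    have hsq : i ^ 2 ≤ 2 * (n * q) ^ 2 := by nlinarith
    have hsq' : (i:ℝ) ^ 2 ≤ (n * q) ^ 2 := by gcongr
    have hc' : (cellNum n q j : ℝ) * (2 * (n * q) ^ 2 + i ^ 2) ^ (2 * n) ≤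
        (n * q) ^ n * (2 * (n * q) ^ 2 - i ^ 2) ^ (2 * n) := by
      have : ((cellNum n q j * (2 * (n * q) ^ 2 + i ^ 2) ^ (2 * n) : ℕ) : ℝ) ≤
        (((n * q) ^ n * (2 * (n * q) ^ 2 - i ^ 2) ^ (2 * n) : ℕ) : ℝ) := by exact_mod_cast hc
      push_cast [Nat.cast_sub hsq] at this
      exact this
    set w : ℝ := (i:ℝ) ^ 2 / (2 * (n * q) ^ 2) with hw
    have hw1 : w < 1 := by
      rw [hw, div_lt_one (by positivity)]
      have : 0 < ((n:ℝ) * q) ^ 2 := by positivity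
      linarith
    have hr := ratio_pow_le_exp (by positivity) hw1 (2 * n)
    have e1 : (1 - w) / (1 + w) = (2 * (n * q) ^ 2 - i ^ 2) / (2 * (n * q) ^ 2 + i ^ 2) := by
      rw [hw]; field_simp
    have hle : smirnovPoly ((j:ℝ) / q) n n / n ^ n ≤ ((1 - w) / (1 + w)) ^ (2 * n) := by
      rw [e1, div_pow, div_le_div_iff₀ (by positivity) (by positivity)]
      have e := smirnovPoly_eq_cellNum hq hj
      rw [← e, mul_pow (n:ℝ) (q:ℝ) n] at hc'
      have hqn : (0:ℝ) < q ^ n := by positivity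
      refine le_of_mul_le_mul_right ?_ hqn
      linarith
    refine hle.trans (hr.trans (exp_le_exp.2 ?_))
    have h8 : ε ^ 2 ≤ (((i:ℕ):ℝ) / (n * q)) ^ 2 := by
      rw [hi]; push_cast; gcongr
    have h9 : w = (((i:ℕ):ℝ) / (n * q)) ^ 2 / 2 := by rw [hw]; field_simp
    rw [h9]; push_cast
    have : (n:ℝ) * ε ^ 2 ≤ n * ((i:ℝ) / (n * q)) ^ 2 := by gcongr
    linarith

lemma rangeCheck_spec {n q : ℕ} : ∀ {J : ℕ}, rangeCheck n q J = true → ∀ j < J,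
    cellCheck n q j = true
  | 0, _, j, hj => absurd hj (Nat.not_lt_zero j)
  | J + 1, h, j, hj => by
    rw [rangeCheck, Bool.and_eq_true] at h
    rcases Nat.lt_succ_iff_lt_or_eq.1 hj with hj | rfl
    · exact rangeCheck_spec h.2 j hj
    · exact h.1

lemma allCheck_spec {q : ℕ} : ∀ {N : ℕ}, allCheck q N = true → ∀ n < N,
    rangeCheck (n + 2) q ((n + 2) * q) = true
  | 0, _, n, hn => absurd hn (Nat.not_lt_zero n)
  | N + 1, h, n, hn => by
    rw [allCheck, Bool.and_eq_true] at h
    rcases Nat.lt_succ_iff_lt_or_eq.1 hn with hn | rfl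
    · exact allCheck_spec h.2 n hn
    · exact h.1

/-- The deviation inequality for fewer than `30` points, from the table of cells. -/
lemma crossSet_le_exp_of_small {n : ℕ} (hn : 0 < n) (hn30 : n < 30) {ε : ℝ} (hε : 0 < ε)
    (hε1 : ε < 1) (hlog : log 4 ≤ 2 * n * ε ^ 2) :
    volume (crossSet (n * ε) n n 1) ≤ ENNReal.ofReal (exp (-(2 * n * ε ^ 2))) := by
  obtain ⟨q, hq, hc⟩ : ∃ q, 0 < q ∧ rangeCheck n q (n * q) = true := by
    rcases Nat.lt_or_ge n 2 with h | h
    · obtain rfl : n = 1 := by omega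
      exact ⟨20, by norm_num, rangeCheck_one⟩
    · obtain ⟨m, rfl⟩ := Nat.exists_eq_add_of_le' h
      exact ⟨8, by norm_num, allCheck_spec allCheck_eight m (by omega)⟩
  have hn' : (0:ℝ) < n := by exact_mod_cast hn
  have hq' : (0:ℝ) < q := by exact_mod_cast hq
  have hJ : (0:ℝ) < n * q := by positivity
  have h0 : 0 ≤ n * q * ε := by positivity
  have hj : ⌊n * q * ε⌋₊ < n * q := by
    rw [Nat.floor_lt h0]; push_cast; nlinarith
  exact crossSet_le_exp_of_cell hn hq hj (rangeCheck_spec hc _ hj) hlog hε (Nat.floor_le h0)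
    (Nat.lt_floor_add_one _)

/-! ### Exponential bounds for the first passage time -/

/-- The partial sums of the generating function `∑ h, q_h(x) ρ ^ h = E [ρ ^ T]` of the first passage
time. Finitely many terms suffice, and the bounds are proved by induction on their number. -/
noncomputable def hitGen (ρ : ℝ) (M : ℕ) (x : ℝ) : ℝ :=
  ∑ h ∈ Finset.range M, hitProb h x * ρ ^ h

lemma hitGen_intervalIntegrable (ρ : ℝ) (M : ℕ) (a b : ℝ) :
    IntervalIntegrable (hitGen ρ M) volume a b := by
  have : hitGen ρ M = fun x => ∑ h ∈ Finset.range M, hitProb h x * ρ ^ h := rfl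
  rw [this]
  have := IntervalIntegrable.sum (Finset.range M) (f := fun h x => hitProb h x * ρ ^ h) fun h _ =>
    (hitProb_intervalIntegrable h a b).mul_const _
  refine this.congr fun x _ => ?_
  simp

lemma hitGen_of_neg (ρ : ℝ) (M : ℕ) {x : ℝ} (hx : x < 0) : hitGen ρ M x ≤ 1 := by
  rcases M with _ | M
  · simp [hitGen]
  · rw [hitGen, Finset.sum_range_succ', Finset.sum_eq_zero]
    · simp [hitProb_zero, hx]
    · intro h _; simp [hitProb_succ_of_neg h hx]

/-- The renewal equation. -/
lemma hitGen_succ (ρ : ℝ) (M : ℕ) {x : ℝ} (hx : 0 ≤ x) :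
    hitGen ρ (M + 1) x = ρ * ∫ s in (x - 1)..x, hitGen ρ M s := by
  have e : ∫ s in (x - 1)..x, hitGen ρ M s =
      ∑ h ∈ Finset.range M, hitProb (h + 1) x * ρ ^ h := by
    simp only [hitGen]
    rw [intervalIntegral.integral_finsetSum fun h _ =>
      (hitProb_intervalIntegrable h _ _).mul_const _]
    refine Finset.sum_congr rfl fun h _ => ?_
    rw [intervalIntegral.integral_mul_const, hitProb_succ_of_nonneg h hx]
  rw [e, hitGen, Finset.sum_range_succ', Finset.mul_sum]
  simp only [hitProb_zero, not_lt.2 hx, if_false, zero_mul, add_zero]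
  exact Finset.sum_congr rfl fun h _ => by ring

lemma integral_exp_neg_mul {κ : ℝ} (hκ : 0 < κ) (θ x : ℝ) :
    ∫ s in (x - 1)..x, exp (-(κ * (s + θ))) = exp (-(κ * (x + θ))) * ((exp κ - 1) / κ) := by
  have hd : ∀ s ∈ Set.uIcc (x - 1) x, HasDerivAt (fun s => -(1 / κ) * exp (-(κ * (s + θ))))
      (exp (-(κ * (s + θ)))) s := by
    intro s _
    have h1 : HasDerivAt (fun s => -(κ * (s + θ))) (-κ) s := by
      simpa using (((hasDerivAt_id s).add_const θ).const_mul κ).fun_neg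
    refine (h1.exp.const_mul _).congr_deriv ?_
    field_simp
  rw [intervalIntegral.integral_eq_sub_of_hasDerivAt hd (Continuous.intervalIntegrable (by fun_prop) _ _)]
  have : exp (-(κ * (x - 1 + θ))) = exp (-(κ * (x + θ))) * exp κ := by
    rw [← exp_add]; congr 1; ring
  rw [this]; field_simp; ring

/-- An exponential is a supersolution of the renewal equation when `ρ (exp κ - 1) ≤ κ`. -/
lemma exp_step {ρ κ : ℝ} (hκ : 0 < κ) (h : ρ * (exp κ - 1) ≤ κ) (θ x : ℝ) :
    ρ * ∫ s in (x - 1)..x, exp (-(κ * (s + θ))) ≤ exp (-(κ * (x + θ))) := by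
  rw [integral_exp_neg_mul hκ]
  have : ρ * ((exp κ - 1) / κ) ≤ 1 := by rw [← mul_div_assoc, div_le_one hκ]; exact h
  nlinarith [exp_pos (-(κ * (x + θ)))]

/-- The exponential bound without gain, which starts from `G ≤ 1` on the negative axis. -/
lemma hitGen_le_exp {ρ κ : ℝ} (hρ : 0 ≤ ρ) (hκ : 0 < κ) (h : ρ * (exp κ - 1) ≤ κ) (M : ℕ) :
    ∀ x, hitGen ρ M x ≤ exp (-(κ * x)) := by
  induction M with
  | zero => intro x; simp [hitGen]; positivity
  | succ M ih =>
    intro x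
    rcases lt_or_ge x 0 with hx | hx
    · exact (hitGen_of_neg ρ _ hx).trans (one_le_exp (by nlinarith))
    · rw [hitGen_succ ρ M hx]
      have := exp_step hκ h 0 x
      simp only [add_zero] at this
      refine le_trans (mul_le_mul_of_nonneg_left ?_ hρ) this
      exact intervalIntegral.integral_mono_on (by linarith) (hitGen_intervalIntegrable _ _ _ _)
        (Continuous.intervalIntegrable (by fun_prop) _ _) fun s _ => ih s

/-- On `[0, 1]` the renewal equation has the explicit solution on the right-hand side. -/
lemma hitGen_le_unit {ρ : ℝ} (hρ : 0 < ρ) (hρ1 : ρ ≤ 1) (M : ℕ) :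
    ∀ x, 0 ≤ x → x ≤ 1 → hitGen ρ M x ≤ 1 - (1 - ρ) * exp (ρ * x) := by
  induction M with
  | zero =>
    intro x hx hx1
    simp only [hitGen, Finset.range_zero, Finset.sum_empty]
    have h1 : exp (ρ * x) ≤ exp ρ := exp_le_exp.2 (by nlinarith)
    have h2 : (1 - ρ) * exp ρ ≤ 1 := by
      have : 1 - ρ ≤ exp (-ρ) := by linarith [add_one_le_exp (-ρ)]
      calc _ ≤ exp (-ρ) * exp ρ := by gcongr
        _ = 1 := by rw [← exp_add]; simp
    nlinarith
  | succ M ih =>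
    intro x hx hx1
    rw [hitGen_succ ρ M hx, ← intervalIntegral.integral_add_adjacent_intervals
      (hitGen_intervalIntegrable ρ M (x - 1) 0) (hitGen_intervalIntegrable ρ M 0 x)]
    have h1 : ∫ s in (x - 1)..0, hitGen ρ M s ≤ ∫ s in (x - 1)..0, (1:ℝ) := by
      refine intervalIntegral.integral_mono_on (by linarith) (hitGen_intervalIntegrable _ _ _ _)
        (by simp) fun s hs => ?_
      rcases hs.2.lt_or_eq with h | h
      · exact hitGen_of_neg ρ M h
      · rw [h]
        refine (ih 0 le_rfl zero_le_one).trans ?_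
        simp; exact hρ1
    have h2 : ∫ s in (0:ℝ)..x, hitGen ρ M s ≤ ∫ s in (0:ℝ)..x, (1 - (1 - ρ) * exp (ρ * s)) :=
      intervalIntegral.integral_mono_on hx (hitGen_intervalIntegrable _ _ _ _)
        (Continuous.intervalIntegrable (by fun_prop) _ _) fun s hs => ih s hs.1 (hs.2.trans hx1)
    have h3 : ∫ s in (0:ℝ)..x, (1 - (1 - ρ) * exp (ρ * s)) =
        x - (1 - ρ) * (exp (ρ * x) - 1) / ρ := by
      have hd : ∀ s ∈ Set.uIcc 0 x, HasDerivAt (fun s => s - (1 - ρ) * exp (ρ * s) / ρ)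
          (1 - (1 - ρ) * exp (ρ * s)) s := by
        intro s _
        have h1 : HasDerivAt (fun s => ρ * s) ρ s := by
          simpa using (hasDerivAt_id s).const_mul ρ
        refine ((hasDerivAt_id s).sub ((h1.exp.const_mul (1 - ρ)).div_const ρ)).congr_deriv ?_
        field_simp
      rw [intervalIntegral.integral_eq_sub_of_hasDerivAt hd
        (Continuous.intervalIntegrable (by fun_prop) _ _)]
      simp; ring
    rw [h3] at h2
    simp only [intervalIntegral.integral_const, zero_sub, neg_sub, smul_eq_mul, mul_one] at h1
    calc _ ≤ ρ * ((1 - x) + (x - (1 - ρ) * (exp (ρ * x) - 1) / ρ)) := by gcongr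
      _ = _ := by field_simp; ring

/-- The exponential bound with a gain `θ`, given that it holds for the explicit solution on `[0, 1]`. -/
lemma hitGen_le_shift {ρ κ θ : ℝ} (hρ : 0 < ρ) (hρ1 : ρ ≤ 1) (hκ : 0 < κ)
    (h : ρ * (exp κ - 1) ≤ κ)
    (henv : ∀ x, 0 ≤ x → x ≤ 1 → 1 - (1 - ρ) * exp (ρ * x) ≤ exp (-(κ * (x + θ)))) (M : ℕ) :
    ∀ x, 0 ≤ x → hitGen ρ M x ≤ exp (-(κ * (x + θ))) := by
  induction M with
  | zero => intro x _; simp [hitGen]; positivity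
  | succ M ih =>
    intro x hx
    rcases le_total x 1 with hx1 | hx1
    · exact (hitGen_le_unit hρ hρ1 _ x hx hx1).trans (henv x hx hx1)
    · rw [hitGen_succ ρ M hx]
      refine le_trans (mul_le_mul_of_nonneg_left ?_ hρ.le) (exp_step hκ h θ x)
      exact intervalIntegral.integral_mono_on (by linarith) (hitGen_intervalIntegrable _ _ _ _)
        (Continuous.intervalIntegrable (by fun_prop) _ _) fun s hs => ih s (by linarith [hs.1])

/-- A condition without `x` for the bound on `[0, 1]`. It is the weighted arithmetic–geometric mean
inequality with weights `κ / (κ + ρ)` and `ρ / (κ + ρ)`, chosen so that `x` cancels, for the two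
exponentials `(1 - ρ) exp (ρ x)` and `exp (-(κ (x + θ)))`, whose sum has to be at least `1`. -/
lemma envelope_of_log {ρ κ θ L : ℝ} (hρ : 0 < ρ) (hρ1 : ρ < 1) (hκ : 0 < κ) (hL : log ρ = -L)
    (h : ρ * κ * θ ≤ (κ + ρ) * log (κ + ρ) + ρ * L + κ * (log (1 - ρ) - log κ)) (x : ℝ) :
    1 - (1 - ρ) * exp (ρ * x) ≤ exp (-(κ * (x + θ))) := by
  have hp : 0 < 1 - ρ := by linarith
  have hv : 0 < κ + ρ := by linarith
  set v := κ + ρ with hvdef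
  set a := log (1 - ρ) + ρ * x - log κ + log v with ha
  set b := -(κ * (x + θ)) + L + log v with hb
  have e1 : (1 - ρ) * exp (ρ * x) = κ / v * exp a := by
    rw [ha, exp_add, exp_sub, exp_add, exp_log hp, exp_log hκ, exp_log hv]; field_simp
  have e2 : exp (-(κ * (x + θ))) = ρ / v * exp b := by
    have : exp L = ρ⁻¹ := by rw [← neg_neg L, ← hL, exp_neg, exp_log hρ]
    rw [hb, exp_add, exp_add, exp_log hv, this]; field_simp
  have h1 := add_one_le_exp a
  have h2 := add_one_le_exp b
  have h3 : κ / v * (a + 1) ≤ κ / v * exp a := by gcongr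
  have h4 : ρ / v * (b + 1) ≤ ρ / v * exp b := by gcongr
  have h5 : κ / v * (a + 1) + ρ / v * (b + 1) = 1 + (κ * a + ρ * b) / v := by
    rw [hvdef] at *; field_simp; ring
  have h6 : 0 ≤ (κ * a + ρ * b) / v := by
    refine div_nonneg ?_ hv.le
    have : κ * a + ρ * b = v * log v + ρ * L + κ * (log (1 - ρ) - log κ) - ρ * κ * θ := by
      rw [ha, hb, hvdef]; ring
    linarith
  rw [e1, e2]; linarith

/-! ### A geometric bound for falling factorials -/

lemma log_ge_of_lt_one {w : ℝ} (hw : 0 < w) (hw1 : w ≤ 1) : (w - w⁻¹) / 2 ≤ log w := by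
  have : 0 ≤ -log w := by linarith [log_nonpos hw.le hw1]
  have h := self_le_sinh_iff.2 this
  rw [sinh_neg, sinh_log hw] at h; linarith

/-- The estimate behind `descFactorial_le_tangent`, in the variable `w = (n - h) / N` with
`N = n exp (-L)`; the tangent point is `w = 1`. -/
lemma stirling_tangent_aux {N w : ℝ} (hN : 0 < N) (hw : 0 < w) (hNw : 1 ≤ N * w) :
    -(1 / (4 * N)) ≤ (1 / 2 + N * w) * log w - N * (w - 1) := by
  rcases le_total 1 w with h1 | h1
  · have hl := one_sub_inv_le_log_of_pos hw
    have : (1 / 2 + N * w) * (1 - w⁻¹) ≤ (1 / 2 + N * w) * log w := by gcongr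
    have e : (1 / 2 + N * w) * (1 - w⁻¹) = 1 / 2 * (1 - w⁻¹) + N * (w - 1) := by field_simp
    have h2 : 0 ≤ 1 - w⁻¹ := by linarith [inv_le_one_of_one_le₀ h1]
    have h3 : 0 < 1 / (4 * N) := by positivity
    linarith
  · have hl := log_ge_of_lt_one hw h1
    have : (1 / 2 + N * w) * ((w - w⁻¹) / 2) ≤ (1 / 2 + N * w) * log w := by gcongr
    refine le_trans ?_ (sub_le_sub_right this _)
    have key : 0 ≤ 2 * (N * (1 - w)) ^ 2 - N * (1 - w) * (1 + w⁻¹) + 1 := by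
      have hz : 0 ≤ N * (1 - w) := by have : 0 ≤ 1 - w := by linarith
                                      positivity
      have hwi : w⁻¹ ≤ N := by rw [inv_le_iff_one_le_mul₀ hw]; exact hNw
      have hwi2 : w⁻¹ - 1 ≤ N * (1 - w) := by
        have : w⁻¹ - 1 = w⁻¹ * (1 - w) := by field_simp
        rw [this]; gcongr
      nlinarith [sq_nonneg (N * (1 - w) - 1)]
    have e : (1 / 2 + N * w) * ((w - w⁻¹) / 2) - N * (w - 1) - -(1 / (4 * N)) =
        (2 * (N * (1 - w)) ^ 2 - N * (1 - w) * (1 + w⁻¹) + 1) / (4 * N) := by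
      field_simp; ring
    have := div_nonneg key (by positivity : 0 ≤ 4 * N)
    linarith

/-- Stirling's approximation of `n! / (n - h)!`: the error terms at `n` and `n - h` are compared by
the monotonicity of the Stirling sequence, so that no constant is lost. -/
lemma log_descFactorial_le {n h : ℕ} (hh : h < n) :
    log (n.descFactorial h) ≤ 1 / 2 * log (n / (n - h : ℕ)) + n * log n -
      (n - h : ℕ) * log (n - h : ℕ) - h := by
  obtain ⟨k, rfl⟩ : ∃ k, n = k + h := ⟨n - h, by omega⟩
  have hk : 0 < k := by omega
  rw [Nat.add_sub_cancel]
  have hk' : (0:ℝ) < k := by exact_mod_cast hk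
  have hn' : (0:ℝ) < (k + h : ℕ) := by exact_mod_cast (by omega : 0 < k + h)
  have hanti := Stirling.log_stirlingSeq'_antitone (show k - 1 ≤ k + h - 1 by omega)
  have e1 : (k - 1).succ = k := by omega
  have e2 : (k + h - 1).succ = k + h := by omega
  simp only [Function.comp, e1, e2, Stirling.log_stirlingSeq_formula] at hanti
  have hf : (k.factorial : ℝ) * ((k + h).descFactorial h : ℝ) = (k + h).factorial := by
    have := Nat.factorial_mul_descFactorial (show h ≤ k + h by omega)
    rw [Nat.add_sub_cancel] at this
    exact_mod_cast this
  have hd : (0:ℝ) < (k + h).descFactorial h := by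
    exact_mod_cast Nat.descFactorial_pos.2 (by omega)
  have hlf := congrArg log hf
  rw [log_mul (by positivity) hd.ne'] at hlf
  rw [log_mul two_ne_zero hk'.ne', log_mul two_ne_zero hn'.ne', log_div hk'.ne' (exp_ne_zero _),
    log_div hn'.ne' (exp_ne_zero _), log_exp] at hanti
  rw [log_div hn'.ne' hk'.ne']
  push_cast at *
  linarith

/-- A geometric bound for `(n)_h / n ^ h` with ratio `exp (-L)`: the logarithm of Stirling's
approximation is almost concave in `h`, and is bounded by its tangent at the point where
`n - h = n exp (-L)`. -/
lemma descFactorial_le_tangent {n h : ℕ} (hh : h ≤ n) {L : ℝ}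
    (hn : 1 ≤ n * exp (-L)) :
    (n.descFactorial h : ℝ) / n ^ h ≤
      exp (n * (L - (1 - exp (-L))) + L / 2 + 1 / (4 * (n * exp (-L)))) * exp (-L) ^ h := by
  have hn0 : 0 < n := by
    rcases Nat.eq_zero_or_pos n with rfl | h
    · simp at hn; linarith
    · exact h
  have hn' : (0:ℝ) < n := by exact_mod_cast hn0
  have main : ∀ h < n, (n.descFactorial h : ℝ) / n ^ h ≤
      exp (n * (L - (1 - exp (-L))) + L / 2 + 1 / (4 * (n * exp (-L)))) * exp (-L) ^ h := by
    intro h hh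
    have hd : (0:ℝ) < n.descFactorial h := by
      exact_mod_cast Nat.descFactorial_pos.2 (by omega)
    have h1 := log_descFactorial_le hh
    have hk : 0 < n - h := by omega
    have hkc : ((n - h : ℕ) : ℝ) = n - h := by push_cast [Nat.cast_sub hh.le]; ring
    have hk1 : (1:ℝ) ≤ (n - h : ℕ) := by exact_mod_cast hk
    set k : ℝ := ((n - h : ℕ) : ℝ) with hkdef
    have hk' : 0 < k := by linarith
    set N : ℝ := n * exp (-L) with hN
    have hNpos : 0 < N := by positivity
    have h2 := stirling_tangent_aux hNpos (w := k / N) (by positivity)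
      (by rw [mul_div_cancel₀ _ hNpos.ne']; exact hk1)
    rw [mul_div_cancel₀ _ hNpos.ne', mul_sub, mul_div_cancel₀ _ hNpos.ne',
      log_div hk'.ne' hNpos.ne'] at h2
    have h3 : log N = log n - L := by
      rw [hN, log_mul hn'.ne' (exp_ne_zero _), log_exp]; ring
    rw [log_div hn'.ne' hk'.ne'] at h1
    rw [h3] at h2
    rw [← log_le_log_iff (by positivity) (by positivity), log_div hd.ne' (by positivity), log_pow,
      log_mul (exp_ne_zero _) (by positivity), log_exp, log_pow, log_exp]
    have h4 : (h:ℝ) = n - k := by linarith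
    rw [h4] at h1 ⊢
    have h5 : n * (L - (1 - exp (-L))) = n * L - n + N := by rw [hN]; ring
    rw [h5]
    nlinarith
  rcases hh.lt_or_eq with hlt | rfl
  · exact main h hlt
  · obtain ⟨m, rfl⟩ := Nat.exists_eq_succ_of_ne_zero hn0.ne'
    have h1 := main m (Nat.lt_succ_self m)
    have e : (((m.succ).descFactorial m.succ : ℕ) : ℝ) / (m.succ : ℕ) ^ m.succ =
        ((m.succ).descFactorial m : ℝ) / (m.succ : ℕ) ^ m * (1 / (m.succ : ℕ)) := by
      rw [Nat.descFactorial_succ, pow_succ]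
      have : m.succ - m = 1 := by omega
      rw [this, one_mul]; field_simp
    rw [e, pow_succ, ← mul_assoc]
    refine mul_le_mul h1 ?_ (by positivity) (by positivity)
    rw [div_le_iff₀ hn']; linarith

/-! ### Elementary bounds for exponentials and logarithms -/

/-- Termwise comparison of power series, from `6 ^ k k! ≤ (2 k + 1)!`. -/
lemma sinh_le_mul_exp {y : ℝ} (hy : 0 ≤ y) : sinh y ≤ y * exp (y ^ 2 / 6) := by
  have h2 : HasSum (fun k : ℕ => y * ((y ^ 2 / 6) ^ k / (k.factorial : ℝ))) (y * exp (y ^ 2 / 6)) := by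
    rw [exp_eq_exp_ℝ]
    exact (NormedSpace.expSeries_div_hasSum_exp (y ^ 2 / 6)).mul_left y
  refine hasSum_le (fun k => ?_) (hasSum_sinh y) h2
  have hfac : 6 ^ k * k.factorial ≤ (2 * k + 1).factorial := by
    induction k with
    | zero => simp
    | succ k ih =>
      have e : (2 * (k + 1) + 1).factorial = (2 * k + 3) * (2 * k + 2) * (2 * k + 1).factorial := by
        rw [show 2 * (k + 1) + 1 = (2 * k + 1) + 1 + 1 by ring, Nat.factorial_succ,
          Nat.factorial_succ]; ring
      rw [e, pow_succ, Nat.factorial_succ]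
      calc 6 ^ k * 6 * ((k + 1) * k.factorial) = (6 * (k + 1)) * (6 ^ k * k.factorial) := by ring
        _ ≤ ((2 * k + 3) * (2 * k + 2)) * (2 * k + 1).factorial := by
            exact Nat.mul_le_mul (by nlinarith) ih
  have hfac' : (6:ℝ) ^ k * k.factorial ≤ (2 * k + 1).factorial := by exact_mod_cast hfac
  have e : y * ((y ^ 2 / 6) ^ k / (k.factorial : ℝ)) = y ^ (2 * k + 1) / (6 ^ k * k.factorial) := by
    rw [div_pow, ← pow_mul]; field_simp; ring
  rw [e]
  gcongr

lemma sinh_ge_cubic {x : ℝ} (hx : 0 ≤ x) : x + x ^ 3 / 6 ≤ sinh x := by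
  have := sum_le_hasSum (Finset.range 2) (fun k _ => by positivity) (hasSum_sinh x)
  norm_num [Finset.sum_range_succ, Nat.factorial] at this
  exact this

/-- The step condition `ρ (exp κ - 1) ≤ κ` for `κ = 2 y` and `ρ = exp (-(y + y² / 6))`. -/
lemma rho_mul_exp_le {y : ℝ} (hy : 0 ≤ y) :
    exp (-(y + y ^ 2 / 6)) * (exp (2 * y) - 1) ≤ 2 * y := by
  have h := sinh_le_mul_exp hy
  have e : exp (-(y + y ^ 2 / 6)) * (exp (2 * y) - 1) = exp (-(y ^ 2 / 6)) * (2 * sinh y) := by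
    rw [sinh_eq, neg_add, exp_add, two_mul, exp_add, exp_neg y]; field_simp
  rw [e]
  calc _ ≤ exp (-(y ^ 2 / 6)) * (2 * (y * exp (y ^ 2 / 6))) := by gcongr
    _ = 2 * y := by rw [exp_neg]; field_simp

/-- Polynomial bounds for `ρ`. The product of each polynomial with `1 / ρ` is monotone on `[0, 1]`
and equals `1` at `0`. -/
lemma rho_bounds {y : ℝ} (hy : 0 ≤ y) (hy1 : y ≤ 1) :
    1 - y + y ^ 2 / 3 - y ^ 4 / 36 ≤ exp (-(y + y ^ 2 / 6)) ∧
    exp (-(y + y ^ 2 / 6)) ≤ 1 - y + y ^ 2 / 3 - y ^ 4 / 36 + y ^ 5 / 162 := by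
  have hE : ∀ x : ℝ, HasDerivAt (fun x : ℝ => exp (x + x ^ 2 / 6)) (exp (x + x ^ 2 / 6) * (1 + x / 3)) x := by
    intro x
    have h1 : HasDerivAt (fun x : ℝ => x + x ^ 2 / 6) (1 + x / 3) x := by
      refine ((hasDerivAt_id x).add ((hasDerivAt_pow 2 x).div_const 6)).congr_deriv ?_
      simp; ring
    exact h1.exp
  have hp : ∀ (c x : ℝ), HasDerivAt (fun x : ℝ => 1 - x + x ^ 2 / 3 - x ^ 4 / 36 + c * x ^ 5)
      (-1 + 2 * x / 3 - x ^ 3 / 9 + 5 * c * x ^ 4) x := by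
    intro c x
    refine (((((hasDerivAt_const x (1:ℝ)).sub (hasDerivAt_id x)).add
      ((hasDerivAt_pow 2 x).div_const 3)).sub ((hasDerivAt_pow 4 x).div_const 36)).add
      ((hasDerivAt_pow 5 x).const_mul c)).congr_deriv ?_
    simp; ring
  have hprod := fun c x => (hp c x).fun_mul (hE x)
  have hcancel : exp (-(y + y ^ 2 / 6)) * exp (y + y ^ 2 / 6) = 1 := by
    rw [← exp_add]; simp
  have hEp := exp_pos (y + y ^ 2 / 6)
  constructor
  · have hanti := antitoneOn_of_deriv_nonpos (convex_Icc (0:ℝ) 1)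
      (f := fun x : ℝ => (1 - x + x ^ 2 / 3 - x ^ 4 / 36 + 0 * x ^ 5) * exp (x + x ^ 2 / 6))
      (by fun_prop) (by fun_prop) (fun x hx => by
        rw [interior_Icc] at hx
        rw [(hprod 0 x).deriv]
        have : (-1 + 2 * x / 3 - x ^ 3 / 9 + 5 * 0 * x ^ 4) * exp (x + x ^ 2 / 6) +
          (1 - x + x ^ 2 / 3 - x ^ 4 / 36 + 0 * x ^ 5) * (exp (x + x ^ 2 / 6) * (1 + x / 3)) =
          -(exp (x + x ^ 2 / 6) * (x ^ 4 / 36 + x ^ 5 / 108)) := by ring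
        rw [this]
        have := hx.1
        have : 0 ≤ exp (x + x ^ 2 / 6) * (x ^ 4 / 36 + x ^ 5 / 108) := by positivity
        linarith)
    have := hanti (Set.left_mem_Icc.2 zero_le_one) ⟨hy, hy1⟩ hy
    simp only [zero_mul, add_zero] at this
    norm_num at this
    refine le_of_mul_le_mul_right ?_ hEp
    rw [hcancel]; exact this
  · have hmono := monotoneOn_of_deriv_nonneg (convex_Icc (0:ℝ) 1)
      (f := fun x : ℝ => (1 - x + x ^ 2 / 3 - x ^ 4 / 36 + 1 / 162 * x ^ 5) * exp (x + x ^ 2 / 6))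
      (by fun_prop) (by fun_prop) (fun x hx => by
        rw [interior_Icc] at hx
        rw [(hprod (1 / 162) x).deriv]
        have : (-1 + 2 * x / 3 - x ^ 3 / 9 + 5 * (1 / 162) * x ^ 4) * exp (x + x ^ 2 / 6) +
          (1 - x + x ^ 2 / 3 - x ^ 4 / 36 + 1 / 162 * x ^ 5) * (exp (x + x ^ 2 / 6) * (1 + x / 3)) =
          exp (x + x ^ 2 / 6) * (x ^ 4 * (1 - x) / 324 + x ^ 6 / 486) := by ring
        rw [this]
        have := hx.1
        have : 0 ≤ 1 - x := by linarith [hx.2]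
        positivity)
    have := hmono (Set.left_mem_Icc.2 zero_le_one) ⟨hy, hy1⟩ hy
    norm_num at this
    refine le_of_mul_le_mul_right ?_ hEp
    rw [hcancel]
    linarith

lemma log_one_add_ge {s : ℝ} (hs : 0 ≤ s) : s - s ^ 2 / 2 ≤ log (1 + s) := by
  refine le_trans ?_ (le_log_one_add_of_nonneg hs)
  rw [le_div_iff₀ (by linarith)]
  have : 0 ≤ s ^ 3 := by positivity
  nlinarith

/-- Two terms of the series of `log ((1 + w) / (1 - w))` at `w = s / (2 + s)`. -/
lemma mul_log_ge {s : ℝ} (hs : 0 ≤ s) :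
    s + s ^ 2 / 2 - s ^ 3 / 6 ≤ (1 + s) * log (1 + s) := by
  have hw0 : 0 ≤ s / (2 + s) := by positivity
  have hw1 : s / (2 + s) < 1 := by rw [div_lt_one (by linarith)]; linarith
  have h := sum_range_le_log_div hw0 hw1 2
  have e : (1 + s / (2 + s)) / (1 - s / (2 + s)) = 1 + s := by
    have : 2 + s ≠ 0 := by linarith
    rw [div_eq_iff (by linarith)]; field_simp; ring
  rw [e] at h
  simp [Finset.sum_range_succ] at h
  have h2 : 2 * (s / (2 + s)) + 2 / 3 * (s / (2 + s)) ^ 3 ≤ log (1 + s) := by linarith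
  refine le_trans ?_ (mul_le_mul_of_nonneg_left h2 (by linarith : 0 ≤ 1 + s))
  have e2 : (1 + s) * (2 * (s / (2 + s)) + 2 / 3 * (s / (2 + s)) ^ 3) =
      (1 + s) * (6 * s * (2 + s) ^ 2 + 2 * s ^ 3) / (3 * (2 + s) ^ 3) := by field_simp; ring
  rw [e2, le_div_iff₀ (by positivity)]
  have : 0 ≤ s ^ 6 := by positivity
  have h5 : 0 ≤ s ^ 5 := by positivity
  have h4 : 0 ≤ s ^ 4 := by positivity
  have h3 : 0 ≤ s ^ 3 := by positivity
  nlinarith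

/-- From `1 - exp (-L) = 2 exp (-L / 2) sinh (L / 2)` and the cubic lower bound for `sinh`. -/
lemma log_one_sub_exp_ge {L : ℝ} (hL : 0 < L) :
    log L - L / 2 + L ^ 2 / 24 - L ^ 4 / 1152 ≤ log (1 - exp (-L)) := by
  have h := sinh_ge_cubic (show 0 ≤ L / 2 by positivity)
  have e : 1 - exp (-L) = exp (-(L / 2)) * (2 * sinh (L / 2)) := by
    have : exp (-L) = exp (-(L / 2)) * exp (-(L / 2)) := by rw [← exp_add]; congr 1; ring
    have h2 : exp (-(L / 2)) * exp (L / 2) = 1 := by rw [← exp_add]; simp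
    rw [this, sinh_eq]; linear_combination -h2
  have h1 : exp (-(L / 2)) * (L * (1 + L ^ 2 / 24)) ≤ 1 - exp (-L) := by
    rw [e]; exact mul_le_mul_of_nonneg_left (by linarith) (exp_pos _).le
  refine le_trans ?_ (log_le_log (by positivity) h1)
  rw [log_mul (exp_ne_zero _) (by positivity), log_exp, log_mul hL.ne' (by positivity)]
  have := log_one_add_ge (show 0 ≤ L ^ 2 / 24 by positivity)
  nlinarith

/-! ### The deviation inequality for uniform variables -/

/-- The condition of `envelope_of_log` for `κ = 2 y`, `ρ = exp (-(y + y² / 6))` and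
`θ = 29/100 (1 - y³)`. After the elementary bounds for the logarithms it becomes a polynomial
inequality of degree `12` in `y`. -/
lemma envelope_condition {y : ℝ} (hy : 0 < y) (hy1 : y ≤ 1) :
    exp (-(y + y ^ 2 / 6)) * (2 * y) * (29 / 100 * (1 - y ^ 3)) ≤
      (2 * y + exp (-(y + y ^ 2 / 6))) * log (2 * y + exp (-(y + y ^ 2 / 6))) +
        exp (-(y + y ^ 2 / 6)) * (y + y ^ 2 / 6) +
        2 * y * (log (1 - exp (-(y + y ^ 2 / 6))) - log (2 * y)) := by
  obtain ⟨hlo, -⟩ := rho_bounds hy.le hy1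
  have hp := log_one_sub_exp_ge (show 0 < y + y ^ 2 / 6 by positivity)
  have hρ1 : exp (-(y + y ^ 2 / 6)) ≤ 1 := exp_le_one_iff.2 (by have := sq_nonneg y; linarith)
  set ρ := exp (-(y + y ^ 2 / 6)) with hρ
  set σ : ℝ := y + y ^ 2 / 3 - y ^ 4 / 36 with hσ
  obtain ⟨s, hs⟩ : ∃ s, s = 2 * y + ρ - 1 := ⟨_, rfl⟩
  have hy0 : 0 ≤ 1 - y := by linarith
  have h3 : y ^ 3 ≤ 1 := pow_le_one₀ hy.le hy1
  have hσ0 : 0 ≤ σ := by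
    have : y ^ 4 ≤ y := by nlinarith
    have := sq_nonneg y
    linarith
  have hσs : σ ≤ s := by linarith
  have hs2 : s ≤ 2 := by linarith
  have hV := mul_log_ge (hσ0.trans hσs)
  have hVσ : σ + σ ^ 2 / 2 - σ ^ 3 / 6 ≤ s + s ^ 2 / 2 - s ^ 3 / 6 := by
    have : 0 ≤ (s - σ) * (1 + (s * (2 - s) + σ * (2 - σ) + (s * (2 - σ) + σ * (2 - s)) / 2) / 6) := by
      have h1 : 0 ≤ 2 - s := by linarith
      have h2 : 0 ≤ 2 - σ := by linarith
      have h4 : 0 ≤ s := hσ0.trans hσs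
      have h5 : 0 ≤ s - σ := by linarith
      positivity
    linarith
  have e : 1 + s = 2 * y + ρ := by rw [hs]; ring
  rw [e] at hV
  have hlin : (1 - y + y ^ 2 / 3 - y ^ 4 / 36) * (y + y ^ 2 / 6 - 2 * y * (29 / 100 * (1 - y ^ 3))) ≤
      ρ * (y + y ^ 2 / 6 - 2 * y * (29 / 100 * (1 - y ^ 3))) := by
    refine mul_le_mul_of_nonneg_right hlo ?_
    have : 0 ≤ y ^ 4 := by positivity
    have := sq_nonneg y
    linarith
  have hlogL : log (y + y ^ 2 / 6) = log y + log (1 + y / 6) := by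
    rw [← log_mul hy.ne' (by positivity)]; congr 1; ring
  have hlog6 := log_one_add_ge (show 0 ≤ y / 6 by positivity)
  rw [hlogL] at hp
  rw [log_mul two_ne_zero hy.ne']
  have hlog2 : log 2 ≤ 69315 / 100000 := by linarith [log_two_lt_d9]
  have hlast : 2 * y * (y / 6 - (y / 6) ^ 2 / 2 - 69315 / 100000 - (y + y ^ 2 / 6) / 2 +
      (y + y ^ 2 / 6) ^ 2 / 24 - (y + y ^ 2 / 6) ^ 4 / 1152) ≤
      2 * y * (log (1 - ρ) - (log 2 + log y)) :=
    mul_le_mul_of_nonneg_left (by linarith) (by positivity)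
  -- Bernstein form on `[0, 1]`: all coefficients are positive.
  have hpoly : σ + σ ^ 2 / 2 - σ ^ 3 / 6 +
      (1 - y + y ^ 2 / 3 - y ^ 4 / 36) * (y + y ^ 2 / 6 - 2 * y * (29 / 100 * (1 - y ^ 3))) +
      2 * y * (y / 6 - (y / 6) ^ 2 / 2 - 69315 / 100000 - (y + y ^ 2 / 6) / 2 +
      (y + y ^ 2 / 6) ^ 2 / 24 - (y + y ^ 2 / 6) ^ 4 / 1152) =
        337 / 10000 * y ^ 1 * (1 - y) ^ 11 +
        8521 / 30000 * y ^ 2 * (1 - y) ^ 10 +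
        18283 / 18000 * y ^ 3 * (1 - y) ^ 9 +
        44009 / 18000 * y ^ 4 * (1 - y) ^ 8 +
        1140941 / 216000 * y ^ 5 * (1 - y) ^ 7 +
        32223631 / 3240000 * y ^ 6 * (1 - y) ^ 6 +
        29592929 / 2160000 * y ^ 7 * (1 - y) ^ 5 +
        6069191 / 486000 * y ^ 8 * (1 - y) ^ 4 +
        662872291 / 93312000 * y ^ 9 * (1 - y) ^ 3 +
        7977371 / 3456000 * y ^ 10 * (1 - y) ^ 2 +
        53068439 / 155520000 * y ^ 11 * (1 - y) ^ 1 +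
        8666741 / 1399680000 * y ^ 12 * (1 - y) ^ 0 := by
    rw [hσ]; ring
  have hpos : 0 ≤ 337 / 10000 * y ^ 1 * (1 - y) ^ 11 +
        8521 / 30000 * y ^ 2 * (1 - y) ^ 10 +
        18283 / 18000 * y ^ 3 * (1 - y) ^ 9 +
        44009 / 18000 * y ^ 4 * (1 - y) ^ 8 +
        1140941 / 216000 * y ^ 5 * (1 - y) ^ 7 +
        32223631 / 3240000 * y ^ 6 * (1 - y) ^ 6 +
        29592929 / 2160000 * y ^ 7 * (1 - y) ^ 5 +
        6069191 / 486000 * y ^ 8 * (1 - y) ^ 4 +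
        662872291 / 93312000 * y ^ 9 * (1 - y) ^ 3 +
        7977371 / 3456000 * y ^ 10 * (1 - y) ^ 2 +
        53068439 / 155520000 * y ^ 11 * (1 - y) ^ 1 +
        8666741 / 1399680000 * y ^ 12 * (1 - y) ^ 0 := by positivity
  linarith

/-- For `y ≤ 1`, the excess of the exponent over `-n y² / 2` is at most the gain `κ θ`. The
hypothesis on `n y²` is needed for small `y`, where the Stirling correction must be small against
`y²`. -/
lemma exponent_le_of_le_one {y n : ℝ} (hy : 0 < y) (hy1 : y ≤ 1) (hn : 30 ≤ n)
    (hlog : 1386 / 500 ≤ n * y ^ 2) :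
    1 ≤ n * exp (-(y + y ^ 2 / 6)) ∧
    n * (y - y ^ 2 / 3 - 1 + exp (-(y + y ^ 2 / 6))) + (y + y ^ 2 / 6) / 2 +
      1 / (4 * (n * exp (-(y + y ^ 2 / 6)))) ≤ 2 * y * (29 / 100 * (1 - y ^ 3)) := by
  obtain ⟨hlo, hhi⟩ := rho_bounds hy.le hy1
  have hρ0 := exp_pos (-(y + y ^ 2 / 6))
  set ρ := exp (-(y + y ^ 2 / 6)) with hρ
  have hn0 : 0 < n := by linarith
  have hy0 : 0 ≤ 1 - y := by linarith
  have h4 : 0 ≤ y ^ 4 := by positivity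
  have h45 : y ^ 4 ≤ y ^ 2 := by nlinarith [sq_nonneg y, pow_le_one₀ (n := 2) hy.le hy1]
  have hρ3 : 3 / 10 ≤ ρ := by nlinarith
  have h5 : y ^ 5 ≤ y ^ 4 := by nlinarith
  have hR : y - y ^ 2 / 3 - 1 + ρ ≤ -(y ^ 4 / 36) + y ^ 5 / 162 := by linarith
  refine ⟨by nlinarith, ?_⟩
  have hinv : ∀ u, 0 < u → 1 ≤ ρ * u → 1 / (4 * (n * ρ)) ≤ u / (4 * n) := by
    intro u hu h
    rw [div_le_div_iff₀ (by positivity) (by positivity)]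
    nlinarith
  -- For `y ≤ 3/10` the Stirling correction is bounded through `1 / n ≤ y² / 2.772`, beyond that
  -- through `n ≥ 30`.
  rcases le_total y (3 / 10) with hc | hc
  · have h1 := hinv (69 / 50) (by norm_num) (by nlinarith)
    have h2 : 69 / 50 / (4 * n) ≤ y ^ 2 * (1245 / 10000) := by
      rw [div_le_iff₀ (by positivity)]; nlinarith
    have h3 : n * (y - y ^ 2 / 3 - 1 + ρ) ≤ 0 := by
      have : y - y ^ 2 / 3 - 1 + ρ ≤ 0 := by linarith
      nlinarith
    have h6 : y ^ 3 ≤ 27 / 1000 := by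
      calc y ^ 3 ≤ (3 / 10) ^ 3 := by gcongr
        _ = _ := by norm_num
    nlinarith
  · have h1 := hinv (6 / 10 + 27 / 10 * y) (by positivity) (by
      refine le_trans ?_ (mul_le_mul_of_nonneg_right hlo (by positivity))
      nlinarith [mul_nonneg hy0 (sub_nonneg.2 hc), mul_nonneg (mul_nonneg hy0 (sub_nonneg.2 hc)) hy.le,
        mul_nonneg (mul_nonneg hy0 (sub_nonneg.2 hc)) (sq_nonneg y), mul_nonneg (mul_nonneg hy0 (sub_nonneg.2 hc)) (pow_nonneg hy.le 3)])
    have h2 : (6 / 10 + 27 / 10 * y) / (4 * n) ≤ (6 / 10 + 27 / 10 * y) / (4 * 30) := by gcongr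
    have h3 : n * (y - y ^ 2 / 3 - 1 + ρ) ≤ 30 * (-(y ^ 4 / 36) + y ^ 5 / 162) := by
      have : -(y ^ 4 / 36) + y ^ 5 / 162 ≤ 0 := by linarith
      nlinarith
    -- Bernstein form on `[3/10, 1]`.
    have hpoly : 2 * y * (29 / 100 * (1 - y ^ 3)) - (30 * (-(y ^ 4 / 36) + y ^ 5 / 162) +
      (y + y ^ 2 / 6) / 2 + (6 / 10 + 27 / 10 * y) / (4 * 30)) = 3176 / 84035 * (y - 3 / 10) ^ 0 * (1 - y) ^ 5 +
        25456 / 84035 * (y - 3 / 10) ^ 1 * (1 - y) ^ 4 +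
        42548 / 50421 * (y - 3 / 10) ^ 2 * (1 - y) ^ 3 +
        69190 / 50421 * (y - 3 / 10) ^ 3 * (1 - y) ^ 2 +
        181625 / 151263 * (y - 3 / 10) ^ 4 * (1 - y) ^ 1 +
        100750 / 453789 * (y - 3 / 10) ^ 5 * (1 - y) ^ 0 := by ring
    have hc' : 0 ≤ y - 3 / 10 := by linarith
    have hpos : 0 ≤ 3176 / 84035 * (y - 3 / 10) ^ 0 * (1 - y) ^ 5 +
        25456 / 84035 * (y - 3 / 10) ^ 1 * (1 - y) ^ 4 +
        42548 / 50421 * (y - 3 / 10) ^ 2 * (1 - y) ^ 3 +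
        69190 / 50421 * (y - 3 / 10) ^ 3 * (1 - y) ^ 2 +
        181625 / 151263 * (y - 3 / 10) ^ 4 * (1 - y) ^ 1 +
        100750 / 453789 * (y - 3 / 10) ^ 5 * (1 - y) ^ 0 := by positivity
    linarith

/-- For `1 ≤ y ≤ 2` the excess of the exponent over `-n y² / 2` is nonpositive, without any gain. -/
lemma exponent_le_of_one_le {y n : ℝ} (hy1 : 1 ≤ y) (hy2 : y ≤ 2) (hn : 30 ≤ n) :
    1 ≤ n * exp (-(y + y ^ 2 / 6)) ∧
    n * (y - y ^ 2 / 3 - 1 + exp (-(y + y ^ 2 / 6))) + (y + y ^ 2 / 6) / 2 +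
      1 / (4 * (n * exp (-(y + y ^ 2 / 6)))) ≤ 0 := by
  obtain ⟨hlo, hhi⟩ := rho_bounds zero_le_one le_rfl
  norm_num at hlo hhi
  obtain ⟨t, rfl⟩ : ∃ t, y = 1 + t := ⟨y - 1, by ring⟩
  have ht0 : 0 ≤ t := by linarith
  have ht1 : 0 ≤ 1 - t := by linarith
  have hρ0 := exp_pos (-(1 + t + (1 + t) ^ 2 / 6))
  have hup : exp (-(1 + t + (1 + t) ^ 2 / 6)) * (1 + 4 / 3 * t) ≤ 3118 / 10000 := by
    have e : -(1 + t + (1 + t) ^ 2 / 6) = -(7 / 6) + (-(4 / 3 * t)) + (-(t ^ 2 / 6)) := by ring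
    have h1 : exp (-(t ^ 2 / 6)) ≤ 1 := exp_le_one_iff.2 (by have := sq_nonneg t; linarith)
    have h2 : exp (-(4 / 3 * t)) * (1 + 4 / 3 * t) ≤ 1 := by
      rw [exp_neg, inv_mul_le_one₀ (exp_pos _)]; linarith [add_one_le_exp (4 / 3 * t)]
    rw [e, exp_add, exp_add]
    calc exp (-(7 / 6)) * exp (-(4 / 3 * t)) * exp (-(t ^ 2 / 6)) * (1 + 4 / 3 * t) =
        exp (-(7 / 6)) * (exp (-(4 / 3 * t)) * (1 + 4 / 3 * t)) * exp (-(t ^ 2 / 6)) := by ring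
      _ ≤ exp (-(7 / 6)) * 1 * 1 := by gcongr
      _ ≤ _ := by linarith
  have hdown : 1 ≤ exp (-(1 + t + (1 + t) ^ 2 / 6)) * (328 / 100 * (1 + 7 / 2 * t)) := by
    have h1 : exp (3 / 2 * t) ≤ 1 + 7 / 2 * t := by
      -- The convex function `exp` lies below its chord on `[0, 3/2]`.
      have hc := convexOn_exp.2 (Set.mem_univ 0) (Set.mem_univ (3 / 2)) ht1 ht0 (by ring)
      simp only [smul_eq_mul, mul_zero, zero_add, exp_zero, mul_one] at hc
      have he : exp (3 / 2) ≤ 9 / 2 := by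
        have h := exp_one_lt_d9
        refine (pow_le_pow_iff_left₀ (exp_pos _).le (by norm_num) two_ne_zero).1 ?_
        rw [← exp_nat_mul]
        have : exp ((2:ℕ) * (3 / 2)) = exp 1 ^ 3 := by rw [← exp_nat_mul]; norm_num
        rw [this]
        calc exp 1 ^ 3 ≤ 2.7182818286 ^ 3 := by gcongr
          _ ≤ _ := by norm_num
      rw [mul_comm t] at hc
      nlinarith
    have e : -(1 + t + (1 + t) ^ 2 / 6) = -(7 / 6) + (-(3 / 2 * t)) + t * (1 - t) / 6 := by ring
    have h2 : 1 ≤ exp (t * (1 - t) / 6) := one_le_exp (by positivity)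
    have h3 : 1 ≤ exp (-(3 / 2 * t)) * (1 + 7 / 2 * t) := by
      rw [exp_neg, inv_mul_eq_div, one_le_div (exp_pos _)]; exact h1
    rw [e, exp_add, exp_add]
    calc 1 ≤ (11 / 36 * (328 / 100)) * 1 * 1 := by norm_num
      _ ≤ (exp (-(7 / 6)) * (328 / 100)) * (exp (-(3 / 2 * t)) * (1 + 7 / 2 * t)) *
          exp (t * (1 - t) / 6) := by gcongr
      _ = _ := by ring
  set ρ := exp (-(1 + t + (1 + t) ^ 2 / 6)) with hρ
  have hn0 : 0 < n := by linarith
  refine ⟨by nlinarith, ?_⟩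
  have h1 : 1 / (4 * (n * ρ)) ≤ 328 / 100 * (1 + 7 / 2 * t) / 120 := by
    rw [div_le_iff₀ (by positivity)]; nlinarith
  have hR : 1 + t - (1 + t) ^ 2 / 3 - 1 + ρ ≤
      -(1 / 3) + t / 3 - t ^ 2 / 3 + 3118 / 10000 / (1 + 4 / 3 * t) := by
    have : ρ ≤ 3118 / 10000 / (1 + 4 / 3 * t) := by rw [le_div_iff₀ (by positivity)]; exact hup
    linarith
  have hkey : 30 * (-(1 / 3) + t / 3 - t ^ 2 / 3 + 3118 / 10000 / (1 + 4 / 3 * t)) +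
      (1 + t + (1 + t) ^ 2 / 6) / 2 + 328 / 100 * (1 + 7 / 2 * t) / 120 ≤ 0 := by
    have hq : 0 < 1 + 4 / 3 * t := by positivity
    have : (30 * (-(1 / 3) + t / 3 - t ^ 2 / 3) +
      (1 + t + (1 + t) ^ 2 / 6) / 2 + 328 / 100 * (1 + 7 / 2 * t) / 120) * (1 + 4 / 3 * t) +
      30 * (3118 / 10000) ≤ 0 := by nlinarith [mul_nonneg ht0 ht1, mul_nonneg (mul_nonneg ht0 ht1) ht0]
    have e : 30 * (-(1 / 3) + t / 3 - t ^ 2 / 3 + 3118 / 10000 / (1 + 4 / 3 * t)) +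
      (1 + t + (1 + t) ^ 2 / 6) / 2 + 328 / 100 * (1 + 7 / 2 * t) / 120 =
      ((30 * (-(1 / 3) + t / 3 - t ^ 2 / 3) +
      (1 + t + (1 + t) ^ 2 / 6) / 2 + 328 / 100 * (1 + 7 / 2 * t) / 120) * (1 + 4 / 3 * t) +
      30 * (3118 / 10000)) / (1 + 4 / 3 * t) := by field_simp; ring
    rw [e]; exact div_nonpos_of_nonpos_of_nonneg this hq.le
  have hneg : -(1 / 3) + t / 3 - t ^ 2 / 3 + 3118 / 10000 / (1 + 4 / 3 * t) ≤ 0 := by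
    have : 0 ≤ (1 + t + (1 + t) ^ 2 / 6) / 2 + 328 / 100 * (1 + 7 / 2 * t) / 120 := by positivity
    linarith
  nlinarith

/-- The one-sided Dvoretzky–Kiefer–Wolfowitz inequality with Massart's constant, for uniform
variables. -/
theorem volume_crossSet_le_exp {n : ℕ} (hn : 0 < n) {ε : ℝ} (hε : 0 < ε)
    (h : log 4 ≤ 2 * n * ε ^ 2) :
    volume (crossSet (n * ε) n n 1) ≤ ENNReal.ofReal (exp (-(2 * n * ε ^ 2))) := by
  have hn' : (0:ℝ) < n := by exact_mod_cast hn
  -- For `ε ≥ 1` the volume is zero: `n` uniform variables never sum to more than `n`.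
  rcases le_or_gt 1 ε with hε1 | hε1
  · refine (volume_crossSet_le_hitProb (by positivity) hn).trans ?_
    rw [Finset.sum_eq_zero]
    · simp
    · intro k hk
      have hk' : (k:ℝ) ≤ n := by exact_mod_cast Nat.lt_succ_iff.1 (Finset.mem_range.1 hk)
      rw [hitProb_eq_zero k (hk'.trans (by nlinarith)), zero_mul]
  rcases Nat.lt_or_ge n 30 with hn30 | hn30
  · exact crossSet_le_exp_of_small hn hn30 hε hε1 h
  have hn30' : (30:ℝ) ≤ n := by exact_mod_cast hn30
  -- The natural variable: `κ = 4 ε = 2 y`.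
  obtain ⟨y, rfl⟩ : ∃ y, ε = y / 2 := ⟨2 * ε, by ring⟩
  have hy : 0 < y := by linarith
  have hy2 : y ≤ 2 := by linarith
  have hL : 0 < y + y ^ 2 / 6 := by positivity
  have hρ0 := exp_pos (-(y + y ^ 2 / 6))
  have hρ1 : exp (-(y + y ^ 2 / 6)) < 1 := exp_lt_one_iff.2 (by linarith)
  have hstep := rho_mul_exp_le hy.le
  obtain ⟨θ, hgen, hone, hexp⟩ : ∃ θ : ℝ,
      hitGen (exp (-(y + y ^ 2 / 6))) (n + 1) (n * (y / 2)) ≤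
        exp (-(2 * y * (n * (y / 2) + θ))) ∧
      1 ≤ n * exp (-(y + y ^ 2 / 6)) ∧
      n * (y - y ^ 2 / 3 - 1 + exp (-(y + y ^ 2 / 6))) + (y + y ^ 2 / 6) / 2 +
        1 / (4 * (n * exp (-(y + y ^ 2 / 6)))) ≤ 2 * y * θ := by
    rcases le_total y 1 with hy1 | hy1
    · refine ⟨29 / 100 * (1 - y ^ 3), ?_, exponent_le_of_le_one hy hy1 hn30' ?_⟩
      · refine hitGen_le_shift hρ0 hρ1.le (by positivity) hstep (fun x _ _ => ?_) _ _ (by positivity)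
        exact envelope_of_log hρ0 hρ1 (by positivity) (log_exp _) (envelope_condition hy hy1) x
      · have := log_four_gt; linarith
    · refine ⟨0, ?_, by simpa using exponent_le_of_one_le hy1 hy2 hn30'⟩
      rw [add_zero]
      exact hitGen_le_exp hρ0.le (by positivity) hstep _ _
  refine (volume_crossSet_le_hitProb (by positivity) hn).trans (ENNReal.ofReal_le_ofReal ?_)
  set C := exp (n * ((y + y ^ 2 / 6) - (1 - exp (-(y + y ^ 2 / 6)))) + (y + y ^ 2 / 6) / 2 +
    1 / (4 * (n * exp (-(y + y ^ 2 / 6))))) with hC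
  calc _ ≤ ∑ k ∈ Finset.range (n + 1), hitProb k (n * (y / 2)) *
        (C * exp (-(y + y ^ 2 / 6)) ^ k) := by
        refine Finset.sum_le_sum fun k hk => ?_
        exact mul_le_mul_of_nonneg_left (descFactorial_le_tangent
          (Nat.lt_succ_iff.1 (Finset.mem_range.1 hk)) hone) (hitProb_nonneg _ _)
    _ = C * hitGen (exp (-(y + y ^ 2 / 6))) (n + 1) (n * (y / 2)) := by
        rw [hitGen, Finset.mul_sum]
        exact Finset.sum_congr rfl fun k _ => by ring
    _ ≤ C * exp (-(2 * y * (n * (y / 2) + θ))) := by gcongr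
    _ ≤ _ := by
        rw [hC, ← exp_add]
        refine exp_le_exp.2 ?_
        linarith

/-! ### Arbitrary laws and empirical tails -/

section EmpiricalTails

open ProbabilityTheory

/-- The generalized inverse of the distribution function of `ν`. Only the values at `u ∈ (0, 1)`
matter, where the set is nonempty and bounded below. -/
noncomputable def quantile (ν : Measure ℝ) (u : ℝ) : ℝ := sInf {c | u ≤ cdf ν c}

lemma quantile_le_iff (ν : Measure ℝ) {u : ℝ} (hu : u ∈ Set.Ioo (0:ℝ) 1) (c : ℝ) :
    quantile ν u ≤ c ↔ u ≤ cdf ν c := by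
  have hne : {c | u ≤ cdf ν c}.Nonempty := by
    obtain ⟨c, hc⟩ := ((tendsto_cdf_atTop ν).eventually (lt_mem_nhds hu.2)).exists
    exact ⟨c, hc.le⟩
  have hbd : BddBelow {c | u ≤ cdf ν c} := by
    obtain ⟨b, hb⟩ := ((tendsto_cdf_atBot ν).eventually (gt_mem_nhds hu.1)).exists
    refine ⟨b, fun c hc => ?_⟩
    by_contra! h
    exact absurd (hc.trans (monotone_cdf ν h.le)) (not_le.2 hb)
  refine ⟨fun h => ?_, fun h => csInf_le hbd h⟩
  have hgt : ∀ d, c < d → u ≤ cdf ν d := by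
    intro d hd
    obtain ⟨e, he, hed⟩ := exists_lt_of_csInf_lt hne (lt_of_le_of_lt h hd)
    exact he.out.trans (monotone_cdf ν hed.le)
  have hrc : Filter.Tendsto (cdf ν) (nhdsWithin c (Set.Ioi c)) (nhds (cdf ν c)) :=
    ((cdf ν).right_continuous c).mono_left (nhdsWithin_mono _ Set.Ioi_subset_Ici_self)
  refine ge_of_tendsto hrc ?_
  filter_upwards [self_mem_nhdsWithin] with d hd using hgt d hd

lemma aemeasurable_quantile (ν : Measure ℝ) :
    AEMeasurable (quantile ν) (volume.restrict (Set.Ioo (0:ℝ) 1)) := by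
  refine aemeasurable_restrict_of_monotoneOn measurableSet_Ioo fun u hu v hv huv => ?_
  rw [quantile_le_iff ν hu]
  exact huv.trans ((quantile_le_iff ν hv _).1 le_rfl)

lemma map_quantile (ν : Measure ℝ) [IsProbabilityMeasure ν] :
    (volume.restrict (Set.Ioo (0:ℝ) 1)).map (quantile ν) = ν := by
  have : IsFiniteMeasure ((volume.restrict (Set.Ioo (0:ℝ) 1)).map (quantile ν)) := by
    refine ⟨?_⟩
    rw [Measure.map_apply_of_aemeasurable (aemeasurable_quantile ν) MeasurableSet.univ]
    simp
  refine Measure.ext_of_Iic _ _ fun c => ?_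
  rw [Measure.map_apply_of_aemeasurable (aemeasurable_quantile ν) measurableSet_Iic,
    Measure.restrict_apply' measurableSet_Ioo, ← ofReal_cdf ν c]
  have h0 := cdf_nonneg ν c
  have h1 := cdf_le_one ν c
  have : quantile ν ⁻¹' Set.Iic c ∩ Set.Ioo 0 1 = Set.Iic (cdf ν c) ∩ Set.Ioo 0 1 := by
    ext u
    simp only [Set.mem_inter_iff, Set.mem_preimage, Set.mem_Iic, and_congr_left_iff]
    exact fun hu => quantile_le_iff ν hu c
  rw [this]
  rcases h1.lt_or_eq with h | h
  · have : Set.Iic (cdf ν c) ∩ Set.Ioo 0 1 = Set.Ioc 0 (cdf ν c) := by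
      ext u; simp only [Set.mem_inter_iff, Set.mem_Iic, Set.mem_Ioo, Set.mem_Ioc]
      constructor
      · rintro ⟨a, b, d⟩; exact ⟨b, a⟩
      · rintro ⟨a, b⟩; exact ⟨b, a, b.trans_lt h⟩
    rw [this, Real.volume_Ioc, sub_zero]
  -- When the distribution function reaches `1`, the endpoint is not in `(0, 1)`.
  · have : Set.Iic (cdf ν c) ∩ Set.Ioo 0 1 = Set.Ioo 0 (cdf ν c) := by
      rw [h]; ext u; simp only [Set.mem_inter_iff, Set.mem_Iic, Set.mem_Ioo]
      constructor
      · rintro ⟨a, b⟩; exact b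
      · rintro ⟨a, b⟩; exact ⟨b.le, a, b⟩
    rw [this, Real.volume_Ioo, sub_zero]

/-- The vectors whose empirical distribution function exceeds `F` by at least `ε` at one of the
coordinates. -/
def badSet (F : ℝ → ℝ) (n : ℕ) (ε : ℝ) : Set (Fin n → ℝ) :=
  {y | ∃ i, (n:ℝ) * (F (y i) + ε) ≤ ((Finset.univ.filter fun l => y l ≤ y i).card : ℝ)}

lemma measurableSet_badSet {F : ℝ → ℝ} (hF : Measurable F) (n : ℕ) (ε : ℝ) :
    MeasurableSet (badSet F n ε) := by
  have : badSet F n ε = ⋃ i, {y | (n:ℝ) * (F (y i) + ε) ≤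
      ((Finset.univ.filter fun l => y l ≤ y i).card : ℝ)} := by
    ext y; simp [badSet]
  rw [this]
  refine MeasurableSet.iUnion fun i => measurableSet_le ?_
    (measurable_count (fun l => measurable_pi_apply l) i)
  exact ((hF.comp (measurable_pi_apply i)).add_const ε).const_mul _

/-- The one-sided deviation inequality for an arbitrary law on `ℝ`, by the quantile transform. -/
lemma pi_badSet_le (ν : Measure ℝ) [IsProbabilityMeasure ν] {n : ℕ} (hn : 0 < n) {ε : ℝ}
    (hε : 0 < ε) (h : log 4 ≤ 2 * n * ε ^ 2) :
    (Measure.pi fun _ : Fin n => ν) (badSet (cdf ν) n ε) ≤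
      ENNReal.ofReal (exp (-(2 * n * ε ^ 2))) := by
  refine le_trans ?_ (volume_crossSet_le_exp hn hε h)
  have hmeas := measurableSet_badSet (monotone_cdf ν).measurable n ε
  have hq : ∀ _ : Fin n, AEMeasurable (quantile ν) (volume.restrict (Set.Ioo (0:ℝ) 1)) :=
    fun _ => aemeasurable_quantile ν
  have : ∀ _ : Fin n, SigmaFinite ((volume.restrict (Set.Ioo (0:ℝ) 1)).map (quantile ν)) := by
    intro _; rw [map_quantile ν]; infer_instance
  have e := Measure.pi_map_pi (μ := fun _ : Fin n => volume.restrict (Set.Ioo (0:ℝ) 1)) hq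
  simp only [map_quantile ν] at e
  rw [← e, Measure.map_apply_of_aemeasurable ?_ hmeas, ← Measure.restrict_pi_pi,
    Measure.restrict_apply' (MeasurableSet.univ_pi fun _ => measurableSet_Ioo)]
  · refine measure_mono ?_
    rintro u ⟨⟨i, hi⟩, hu⟩
    have hu' : ∀ l, u l ∈ Set.Ioo (0:ℝ) 1 := fun l => hu l (Set.mem_univ l)
    refine ⟨fun l => ⟨(hu' l).1.le, (hu' l).2.le⟩, ?_⟩
    simp only [quantile_le_iff ν (hu' _)] at hi
    set t := cdf ν (quantile ν (u i))
    have hit : u i ≤ t := (quantile_le_iff ν (hu' i) _).1 le_rfl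
    -- Several `u l` may share one quantile; the largest one below `t` has the full rank.
    obtain ⟨j, hj, hmax⟩ := Finset.exists_max_image (Finset.univ.filter fun l => u l ≤ t) u
      ⟨i, by simpa using hit⟩
    simp only [Finset.mem_filter, Finset.mem_univ, true_and] at hj hmax
    refine ⟨j, ?_⟩
    have hset : (Finset.univ.filter fun l => u l ≤ u j) = Finset.univ.filter fun l => u l ≤ t := by
      ext l
      simp only [Finset.mem_filter, Finset.mem_univ, true_and]
      exact ⟨fun h => h.trans hj, hmax l⟩
    rw [hset]
    have : (n:ℝ) * u j ≤ n * t := by gcongr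
    linarith
  · refine aemeasurable_pi_lambda _ fun i => ?_
    exact (aemeasurable_quantile ν).comp_quasiMeasurePreserving
      (Measure.quasiMeasurePreserving_eval _ i)

variable {X : Type*} [MeasurableSpace X]

/-- The samples for which the empirical distribution function of `g` exceeds the true one by at least
`ε` at one of the sample points. -/
def badSample (P : Measure X) (g : X → ℝ) (n : ℕ) (ε : ℝ) : Set (Fin n → X) :=
  {xs | ∃ i, (n:ℝ) * ((P {x | g x ≤ g (xs i)}).toReal + ε) ≤
    ((Finset.univ.filter fun l => g (xs l) ≤ g (xs i)).card : ℝ)}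

lemma badSample_eq (P : Measure X) [IsProbabilityMeasure P] {g : X → ℝ} (hg : Measurable g)
    (n : ℕ) (ε : ℝ) :
    badSample P g n ε = (fun xs i => g (xs i)) ⁻¹' badSet (cdf (P.map g)) n ε := by
  have : IsProbabilityMeasure (P.map g) := Measure.isProbabilityMeasure_map hg.aemeasurable
  ext xs
  simp only [badSample, badSet, Set.mem_preimage, Set.mem_ofPred_eq, cdf_eq_real, Measure.real,
    Measure.map_apply hg measurableSet_Iic]
  rfl

lemma measurableSet_badSample (P : Measure X) [IsProbabilityMeasure P] {g : X → ℝ}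
    (hg : Measurable g) (n : ℕ) (ε : ℝ) : MeasurableSet (badSample P g n ε) := by
  rw [badSample_eq P hg]
  exact (measurable_pi_lambda _ fun i => hg.comp (measurable_pi_apply i))
    (measurableSet_badSet (monotone_cdf _).measurable n ε)

/-- The deviation level of the theorem is chosen so that `exp (-2 n ε²) = δ / 4`; the condition
`2 n ε² ≥ log 4` is `δ ≤ 1`. -/
lemma pi_badSample_le (P : Measure X) [IsProbabilityMeasure P] {g : X → ℝ} (hg : Measurable g)
    {n : ℕ} (hn : 0 < n) {δ : ℝ} (hδ : δ ∈ Set.Ioo (0:ℝ) 1) :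
    (Measure.pi fun _ : Fin n => P) (badSample P g n √(log (4 / δ) / (2 * n))) ≤
      ENNReal.ofReal (δ / 4) := by
  have : IsProbabilityMeasure (P.map g) := Measure.isProbabilityMeasure_map hg.aemeasurable
  have hn' : (0:ℝ) < n := by exact_mod_cast hn
  have h4 : 4 ≤ 4 / δ := by rw [le_div_iff₀ hδ.1]; linarith [hδ.2]
  have hlog4 : 0 < log 4 := log_pos (by norm_num)
  have hlog : log 4 ≤ log (4 / δ) := log_le_log (by norm_num) h4
  have hpos : 0 < log (4 / δ) / (2 * n) := by
    have := hlog4.trans_le hlog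
    positivity
  have hsq : 2 * n * √(log (4 / δ) / (2 * n)) ^ 2 = log (4 / δ) := by
    rw [sq_sqrt hpos.le]; field_simp
  have key := pi_badSet_le (P.map g) hn (sqrt_pos.2 hpos) (by rw [hsq]; exact hlog)
  rw [hsq, exp_neg, exp_log (by have := hδ.1; positivity), inv_div] at key
  refine le_trans (le_of_eq ?_) key
  rw [badSample_eq P hg,
    ← Measure.pi_map_pi (μ := fun _ : Fin n => P) (f := fun _ => g) fun _ => hg.aemeasurable,
    Measure.map_apply (by fun_prop) (measurableSet_badSet (monotone_cdf _).measurable n _)]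

/-- A lower deviation of the empirical tail at `c` is an upper deviation of the empirical distribution
function at the largest sample value below `c`. -/
lemma qtail_sub_qemp_le {P : Measure X} [IsProbabilityMeasure P] {f : X → ℝ} (hf : Measurable f)
    {n : ℕ} (hn : 0 < n) {ε : ℝ} (hε : 0 ≤ ε) {xs : Fin n → X} (hx : xs ∉ badSample P f n ε)
    (c : ℝ) : qtail P f c - qemp f xs c ≤ ε := by
  by_contra! hlt
  have hn' : (0:ℝ) < n := by exact_mod_cast hn
  have hcompl : qtail P f c = 1 - (P {x | f x < c}).toReal := by
    have := prob_compl_eq_one_sub (μ := P) (s := {x | f x < c}) (hf measurableSet_Iio)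
    have e : {x | f x < c}ᶜ = {x | c ≤ f x} := by ext x; simp
    rw [qtail, ← e, this, ENNReal.toReal_sub_of_le prob_le_one ENNReal.one_ne_top]; simp
  have hcount : ((Finset.univ.filter fun i => c ≤ f (xs i)).card : ℝ) =
      n - ((Finset.univ.filter fun i => f (xs i) < c).card : ℝ) := by
    have := Finset.card_filter_add_card_filter_not (s := (Finset.univ : Finset (Fin n)))
      (fun i => f (xs i) < c)
    simp only [not_lt, Finset.card_univ, Fintype.card_fin] at this
    have h' : (n : ℝ) = _ := congrArg Nat.cast this.symm
    rw [h']; push_cast; ring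
  rw [hcompl, qemp, hcount, sub_div, div_self hn'.ne'] at hlt
  have hlt' : n * ((P {x | f x < c}).toReal + ε) <
      ((Finset.univ.filter fun i => f (xs i) < c).card : ℝ) := by
    have : (P {x | f x < c}).toReal + ε <
      ((Finset.univ.filter fun i => f (xs i) < c).card : ℝ) / n := by linarith
    rw [lt_div_iff₀ hn'] at this; linarith
  have hne : (Finset.univ.filter fun i => f (xs i) < c).Nonempty := by
    rw [← Finset.card_pos]
    have : (0:ℝ) < ((Finset.univ.filter fun i => f (xs i) < c).card : ℝ) :=
      lt_of_le_of_lt (by positivity) hlt'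
    exact_mod_cast this
  obtain ⟨i, hi, hmax⟩ := Finset.exists_max_image _ (fun i => f (xs i)) hne
  simp only [Finset.mem_filter, Finset.mem_univ, true_and] at hi hmax
  refine hx ⟨i, ?_⟩
  have hset : (Finset.univ.filter fun l => f (xs l) ≤ f (xs i)) =
      Finset.univ.filter fun l => f (xs l) < c := by
    ext l
    simp only [Finset.mem_filter, Finset.mem_univ, true_and]
    exact ⟨fun h => h.trans_lt hi, hmax l⟩
  rw [hset]
  refine le_trans ?_ hlt'.le
  have : (P {x | f x ≤ f (xs i)}).toReal ≤ (P {x | f x < c}).toReal :=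
    ENNReal.toReal_mono (measure_ne_top _ _) (measure_mono fun x hx => lt_of_le_of_lt hx hi)
  gcongr

/-- An upper deviation of the empirical tail at `c` is an upper deviation of the empirical distribution
function of `-f` at the smallest sample value of `f` that is at least `c`. -/
lemma qemp_sub_qtail_le {P : Measure X} [IsProbabilityMeasure P] {f : X → ℝ}
    {n : ℕ} (hn : 0 < n) {ε : ℝ} (hε : 0 ≤ ε) {xs : Fin n → X}
    (hx : xs ∉ badSample P (fun x => -f x) n ε)
    (c : ℝ) : qemp f xs c - qtail P f c ≤ ε := by
  by_contra! hlt
  have hn' : (0:ℝ) < n := by exact_mod_cast hn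
  rw [qemp, qtail] at hlt
  have hlt' : n * ((P {x | c ≤ f x}).toReal + ε) <
      ((Finset.univ.filter fun i => c ≤ f (xs i)).card : ℝ) := by
    have : (P {x | c ≤ f x}).toReal + ε <
      ((Finset.univ.filter fun i => c ≤ f (xs i)).card : ℝ) / n := by linarith
    rw [lt_div_iff₀ hn'] at this; linarith
  have hne : (Finset.univ.filter fun i => c ≤ f (xs i)).Nonempty := by
    rw [← Finset.card_pos]
    have : (0:ℝ) < ((Finset.univ.filter fun i => c ≤ f (xs i)).card : ℝ) :=
      lt_of_le_of_lt (by positivity) hlt'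
    exact_mod_cast this
  obtain ⟨i, hi, hmin⟩ := Finset.exists_min_image _ (fun i => f (xs i)) hne
  simp only [Finset.mem_filter, Finset.mem_univ, true_and] at hi hmin
  refine hx ⟨i, ?_⟩
  simp only [neg_le_neg_iff]
  have hset : (Finset.univ.filter fun l => f (xs i) ≤ f (xs l)) =
      Finset.univ.filter fun l => c ≤ f (xs l) := by
    ext l
    simp only [Finset.mem_filter, Finset.mem_univ, true_and]
    exact ⟨fun h => hi.trans h, hmin l⟩
  rw [hset]
  refine le_trans ?_ hlt'.le
  have : (P {x | f (xs i) ≤ f x}).toReal ≤ (P {x | c ≤ f x}).toReal :=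
    ENNReal.toReal_mono (measure_ne_top _ _) (measure_mono fun x hx => hi.trans hx.out)
  gcongr

lemma ratio_bound {u p u' p' a b : ℝ} (hp : 0 < p) (hp' : 0 < p') (hu : 0 ≤ u)
    (h1 : |u' - u| ≤ a) (h2 : |p' - p| ≤ b) :
    |u' / p' - u / p| ≤ 1 / p' * (a + u / p * b) := by
  have e : u' / p' - u / p = 1 / p' * ((u' - u) - u / p * (p' - p)) := by field_simp; ring
  rw [e, abs_mul, abs_of_pos (by positivity : 0 < 1 / p')]
  gcongr
  refine (abs_sub _ _).trans (add_le_add h1 ?_)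
  rw [abs_mul, abs_of_nonneg (by positivity : 0 ≤ u / p)]
  gcongr

end EmpiricalTails

/-! ### The confidence bound -/

/-- Lemma 1: uniform confidence bound for the ratio of empirical tail functions. -/
theorem ratio_confidence_bound {X : Type*} [MeasurableSpace X]
    (f : X → ℝ) (hf : Measurable f) (hf01 : ∀ x, f x ∈ Set.Icc (0:ℝ) 1)
    (Pp Pu : Measure X) [IsProbabilityMeasure Pp] [IsProbabilityMeasure Pu]
    (np nu : ℕ) (hnp : 0 < np) (hnu : 0 < nu)
    (δ : ℝ) (hδ : δ ∈ Set.Ioo (0:ℝ) 1) :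
    (1 : ℝ) - δ ≤
      (sampleMeasure Pp Pu np nu
        {ω | ∀ c ∈ Set.Icc (0:ℝ) 1,
          0 < qemp f ω.1 c → 0 < qtail Pp f c →
          |qemp f ω.2 c / qemp f ω.1 c - qtail Pu f c / qtail Pp f c| ≤
            (1 / qemp f ω.1 c) *
              (Real.sqrt (Real.log (4/δ) / (2*nu)) +
                (qtail Pu f c / qtail Pp f c) * Real.sqrt (Real.log (4/δ) / (2*np)))}).toReal := by
  set εu := √(log (4 / δ) / (2 * nu)) with hεu
  set εp := √(log (4 / δ) / (2 * np)) with hεp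
  set g : X → ℝ := fun x => -f x with hg
  have hgm : Measurable g := hf.neg
  set Bp := badSample Pp f np εp ∪ badSample Pp g np εp with hBp
  set Bu := badSample Pu f nu εu ∪ badSample Pu g nu εu with hBu
  have hmp : MeasurableSet Bp := 
    (measurableSet_badSample Pp hf np εp).union (measurableSet_badSample Pp hgm np εp)
  have hmu : MeasurableSet Bu := 
    (measurableSet_badSample Pu hf nu εu).union (measurableSet_badSample Pu hgm nu εu)
  have hδ0 := hδ.1
  have hδ2 : ENNReal.ofReal (δ / 4) + ENNReal.ofReal (δ / 4) = ENNReal.ofReal (δ / 2) := by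
    rw [← ENNReal.ofReal_add (by positivity) (by positivity)]; congr 1; ring
  have hp : (Measure.pi fun _ : Fin np => Pp) Bp ≤ ENNReal.ofReal (δ / 2) := by
    rw [← hδ2]
    exact (measure_union_le _ _).trans 
      (add_le_add (pi_badSample_le Pp hf hnp hδ) (pi_badSample_le Pp hgm hnp hδ))
  have hu : (Measure.pi fun _ : Fin nu => Pu) Bu ≤ ENNReal.ofReal (δ / 2) := by
    rw [← hδ2]
    exact (measure_union_le _ _).trans 
      (add_le_add (pi_badSample_le Pu hf hnu hδ) (pi_badSample_le Pu hgm hnu hδ))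
  have : IsProbabilityMeasure (sampleMeasure Pp Pu np nu) := by
    rw [sampleMeasure]; infer_instance
  set B : Set ((Fin np → X) × (Fin nu → X)) := Bp ×ˢ Set.univ ∪ Set.univ ×ˢ Bu with hB
  have hBm : MeasurableSet B := 
    (hmp.prod MeasurableSet.univ).union (MeasurableSet.univ.prod hmu)
  have hBle : sampleMeasure Pp Pu np nu B ≤ ENNReal.ofReal δ := by
    refine (measure_union_le _ _).trans ?_
    rw [sampleMeasure, Measure.prod_prod, Measure.prod_prod, measure_univ, measure_univ, mul_one,
      one_mul]
    refine (add_le_add hp hu).trans (le_of_eq ?_)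
    rw [← ENNReal.ofReal_add (by positivity) (by positivity)]; congr 1; ring
  have hcompl : 1 - δ ≤ (sampleMeasure Pp Pu np nu Bᶜ).toReal := by
    rw [prob_compl_eq_one_sub hBm, ENNReal.toReal_sub_of_le prob_le_one ENNReal.one_ne_top]
    have := ENNReal.toReal_mono ENNReal.ofReal_ne_top hBle
    rw [ENNReal.toReal_ofReal hδ0.le] at this
    rw [ENNReal.toReal_one]
    linarith
  refine hcompl.trans (ENNReal.toReal_mono (measure_ne_top _ _) (measure_mono ?_))
  rintro ⟨xs, ys⟩ hω c - hpos hqpos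
  simp only [hB, hBp, hBu, Set.mem_compl_iff, Set.mem_union, Set.mem_prod, Set.mem_univ, and_true,
    true_and, not_or] at hω
  obtain ⟨⟨h1, h2⟩, h3, h4⟩ := hω
  refine ratio_bound hqpos hpos ENNReal.toReal_nonneg ?_ ?_
  · have e1 := qtail_sub_qemp_le hf hnu (sqrt_nonneg _) h3 c
    have e2 := qemp_sub_qtail_le hnu (sqrt_nonneg _) h4 c
    rw [abs_le]; constructor <;> linarith
  · have e1 := qtail_sub_qemp_le hf hnp (sqrt_nonneg _) h1 c
    have e2 := qemp_sub_qtail_le hnp (sqrt_nonneg _) h2 c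
    rw [abs_le]; constructor <;> linarith
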